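/- arXiv:1401.4698 — 8 statements merged into one kernel-verified Lean document; each statement's English description precedes it below -/
import Mathlib

section
/- For every real vector space X, every function g : X → EReal and every point x ∈ X, the supremum of μ[g] over all μ ∈ M(x) equals the concave envelope g^♯ evaluated at x: sup_{μ ∈ M(x)} μ[g] = g^♯(x). -/
/-- An `EReal`-valued function on a real vector space is concave
(with the convention `⊤ + ⊥ = ⊥` of `EReal`). -/
def IsEConcave {X : Type*} [AddCommGroup X] [Module ℝ X] (ψ : X → EReal) : Prop :=
  ∀ x y : X, ∀ a b : ℝ, 0 ≤ a → 0 ≤ b → a + b = 1 →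
    (a : EReal) * ψ x + (b : EReal) * ψ y ≤ ψ (a • x + b • y)

/-- The concave envelope `g^♯` of `g : X → EReal`: the pointwise infimum of all
concave functions dominating `g`. -/
noncomputable def concaveEnvelope {X : Type*} [AddCommGroup X] [Module ℝ X]
    (g : X → EReal) (x : X) : EReal :=
  ⨅ ψ : {ψ : X → EReal // IsEConcave ψ ∧ ∀ y, g y ≤ ψ y}, ψ.1 x
/-- A finitely supported probability measure `μ = Σ λᵢ δ_{xᵢ}` on `X` with
barycenter `x`; an element of `M(x)`. -/
structure SimpleProb (X : Type*) [AddCommGroup X] [Module ℝ X] (x : X) where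
  supp : Finset X
  w : X → ℝ
  nonneg : ∀ y, 0 ≤ w y
  zero_off : ∀ y ∉ supp, w y = 0
  total : ∑ y ∈ supp, w y = 1
  bary : ∑ y ∈ supp, w y • y = x

/-- The integral `μ[g]` of an `EReal`-valued function under a finitely
supported probability measure, as a finite sum in `EReal`. -/
noncomputable def SimpleProb.exp {X : Type*} [AddCommGroup X] [Module ℝ X] {x : X}
    (μ : SimpleProb X x) (g : X → EReal) : EReal :=
  ∑ y ∈ μ.supp, (μ.w y : EReal) * g y

lemma ereal_mul_sum_aux {ι : Type*} (s : Finset ι) (f : ι → EReal) (a : ℝ) (ha : 0 ≤ a) :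
    (a : EReal) * ∑ i ∈ s, f i = ∑ i ∈ s, (a : EReal) * f i := by
  classical
  induction s using Finset.induction_on with
  | empty => simp
  | insert i s hi ih =>
    rw [Finset.sum_insert hi, Finset.sum_insert hi,
      EReal.left_distrib_of_nonneg_of_ne_top (by exact_mod_cast ha) (EReal.coe_ne_top a), ih]

lemma jensen_aux {X : Type*} [AddCommGroup X] [Module ℝ X] (ψ : X → EReal)
    (hψ : IsEConcave ψ) (w : X → ℝ) (hw : ∀ y, 0 ≤ w y) (s : Finset X) :
    0 < ∑ y ∈ s, w y →
    ∑ y ∈ s, (w y : EReal) * ψ y ≤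
      ((∑ y ∈ s, w y : ℝ) : EReal) * ψ ((∑ y ∈ s, w y)⁻¹ • ∑ y ∈ s, w y • y) := by
  classical
  induction s using Finset.induction_on with
  | empty => simp
  | insert i s hi ih =>
    intro hpos
    rw [Finset.sum_insert hi] at hpos ⊢
    rw [Finset.sum_insert hi, Finset.sum_insert hi]
    have hW : 0 ≤ ∑ y ∈ s, w y := Finset.sum_nonneg fun y _ => hw y
    rcases hW.eq_or_lt with h0 | hW
    · have hz : ∀ y ∈ s, w y = 0 :=
        (Finset.sum_eq_zero_iff_of_nonneg fun y _ => hw y).1 h0.symm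
      have e1 : ∑ y ∈ s, (w y : EReal) * ψ y = 0 :=
        Finset.sum_eq_zero fun y hy => by simp [hz y hy]
      have e2 : ∑ y ∈ s, w y • y = 0 :=
        Finset.sum_eq_zero fun y hy => by simp [hz y hy]
      rw [← h0, add_zero] at hpos
      rw [e1, e2, ← h0, add_zero, add_zero, add_zero, smul_smul, inv_mul_cancel₀ hpos.ne',
        one_smul]
    · have ih := ih hW
      set W := ∑ y ∈ s, w y with hWd
      set c := ∑ y ∈ s, w y • y
      have hT : 0 ≤ w i + W := hpos.le
      have key := hψ i (W⁻¹ • c) (w i / (w i + W)) (W / (w i + W))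
        (div_nonneg (hw i) hT) (div_nonneg hW.le hT) (by field_simp)
      have e : (w i / (w i + W)) • i + (W / (w i + W)) • W⁻¹ • c
          = (w i + W)⁻¹ • (w i • i + c) := by
        rw [smul_add, smul_smul, smul_smul]
        congr 2 <;> field_simp
      rw [e] at key
      have hTE : (0 : EReal) ≤ ((w i + W : ℝ) : EReal) := by exact_mod_cast hT
      calc _ ≤ (w i : EReal) * ψ i + (W : EReal) * ψ (W⁻¹ • c) := by gcongr
        _ = ((w i + W : ℝ) : EReal) * (((w i / (w i + W) : ℝ) : EReal) * ψ i
              + ((W / (w i + W) : ℝ) : EReal) * ψ (W⁻¹ • c)) := by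
            rw [EReal.left_distrib_of_nonneg_of_ne_top hTE (EReal.coe_ne_top _),
              ← mul_assoc, ← mul_assoc, ← EReal.coe_mul, ← EReal.coe_mul,
              mul_div_cancel₀ _ hpos.ne', mul_div_cancel₀ _ hpos.ne']
        _ ≤ _ := mul_le_mul_of_nonneg_left key hTE

/-- Convex combination of simple probabilities. -/
noncomputable def SimpleProb.mix {X : Type*} [AddCommGroup X] [Module ℝ X] {x y : X}
    (μ : SimpleProb X x) (ν : SimpleProb X y) (a b : ℝ) (ha : 0 ≤ a) (hb : 0 ≤ b)
    (hab : a + b = 1) : SimpleProb X (a • x + b • y) := by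
  classical
  have h1 : ∀ z ∈ μ.supp ∪ ν.supp, z ∉ μ.supp → μ.w z = 0 := fun z _ h => μ.zero_off z h
  have h2 : ∀ z ∈ μ.supp ∪ ν.supp, z ∉ ν.supp → ν.w z = 0 := fun z _ h => ν.zero_off z h
  exact
  { supp := μ.supp ∪ ν.supp
    w := fun z => a * μ.w z + b * ν.w z
    nonneg := fun z => add_nonneg (mul_nonneg ha (μ.nonneg z)) (mul_nonneg hb (ν.nonneg z))
    zero_off := fun z hz => by
      rw [Finset.mem_union, not_or] at hz
      rw [μ.zero_off z hz.1, ν.zero_off z hz.2]; simp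
    total := by
      rw [Finset.sum_add_distrib, ← Finset.mul_sum, ← Finset.mul_sum,
        ← Finset.sum_subset Finset.subset_union_left h1,
        ← Finset.sum_subset Finset.subset_union_right h2, μ.total, ν.total]
      simpa using hab
    bary := by
      simp only [add_smul, mul_smul]
      rw [Finset.sum_add_distrib, ← Finset.smul_sum, ← Finset.smul_sum,
        ← Finset.sum_subset Finset.subset_union_left (fun z hz h => by simp [h1 z hz h]),
        ← Finset.sum_subset Finset.subset_union_right (fun z hz h => by simp [h2 z hz h]),
        μ.bary, ν.bary] }

lemma SimpleProb.mix_exp {X : Type*} [AddCommGroup X] [Module ℝ X] {x y : X}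
    (μ : SimpleProb X x) (ν : SimpleProb X y) (a b : ℝ) (ha : 0 ≤ a) (hb : 0 ≤ b)
    (hab : a + b = 1) (g : X → EReal) :
    (μ.mix ν a b ha hb hab).exp g = (a : EReal) * μ.exp g + (b : EReal) * ν.exp g := by
  classical
  have e : (μ.mix ν a b ha hb hab).exp g
      = ∑ z ∈ μ.supp ∪ ν.supp, ((a * μ.w z + b * ν.w z : ℝ) : EReal) * g z := by
    unfold SimpleProb.exp SimpleProb.mix
    congr!
  rw [e]
  unfold SimpleProb.exp
  rw [Finset.sum_subset (Finset.subset_union_left (s₁ := μ.supp) (s₂ := ν.supp))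
      (f := fun z => (μ.w z : EReal) * g z) (fun z _ h => by simp [μ.zero_off z h]),
    Finset.sum_subset (Finset.subset_union_right (s₁ := μ.supp) (s₂ := ν.supp))
      (f := fun z => (ν.w z : EReal) * g z) (fun z _ h => by simp [ν.zero_off z h]),
    ereal_mul_sum_aux _ _ _ ha, ereal_mul_sum_aux _ _ _ hb, ← Finset.sum_add_distrib]
  refine Finset.sum_congr rfl fun z _ => ?_
  rw [EReal.coe_add, EReal.right_distrib_of_nonneg
    (by exact_mod_cast mul_nonneg ha (μ.nonneg z)) (by exact_mod_cast mul_nonneg hb (ν.nonneg z)),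
    EReal.coe_mul, EReal.coe_mul, mul_assoc, mul_assoc]

lemma exists_of_lt_mul_iSup {ι : Type*} (f : ι → EReal) (a : ℝ) (ha : 0 < a) (c : EReal)
    (h : c < (a : EReal) * ⨆ i, f i) : ∃ i, c < (a : EReal) * f i := by
  by_contra! hc
  refine absurd h (not_lt.2 ?_)
  have ha' : (0 : EReal) < (a : EReal) := by exact_mod_cast ha
  rw [mul_comm, ← EReal.le_div_iff_mul_le ha' (EReal.coe_ne_top a)]
  refine iSup_le fun i => ?_
  rw [EReal.le_div_iff_mul_le ha' (EReal.coe_ne_top a), mul_comm]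
  exact hc i

lemma sup_concave_aux {X : Type*} [AddCommGroup X] [Module ℝ X] (g : X → EReal) :
    IsEConcave fun x => ⨆ μ : SimpleProb X x, μ.exp g := by
  intro x y a b ha hb hab
  generalize hφ : (fun x => ⨆ μ : SimpleProb X x, μ.exp g) = φ
  rcases ha.eq_or_lt with rfl | ha'
  · obtain rfl : b = 1 := by linarith
    simp
  rcases hb.eq_or_lt with rfl | hb'
  · obtain rfl : a = 1 := by linarith
    simp
  subst hφ
  refine EReal.add_le_of_forall_lt fun p hp q hq => ?_
  obtain ⟨μ, hμ⟩ := exists_of_lt_mul_iSup _ a ha' p hp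
  obtain ⟨ν, hν⟩ := exists_of_lt_mul_iSup _ b hb' q hq
  refine le_trans (add_le_add hμ.le hν.le) ?_
  rw [← SimpleProb.mix_exp μ ν a b ha hb hab]
  exact le_iSup (fun μ : SimpleProb X (a • x + b • y) => μ.exp g) _

/-- The Dirac mass. -/
def SimpleProb.diracAux {X : Type*} [AddCommGroup X] [Module ℝ X] (x : X)
    [DecidableEq X] : SimpleProb X x where
  supp := {x}
  w := fun y => if y = x then 1 else 0
  nonneg := fun y => by split_ifs <;> norm_num
  zero_off := fun y hy => by simpa using hy
  total := by simp
  bary := by simp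

/-- For every real vector space `X`, every `g : X → EReal` and every
`x ∈ X`, the supremum of `μ[g]` over all finitely supported probability measures `μ`
with barycenter `x` equals the concave envelope `g^♯(x)`. -/
theorem sup_simpleProb_eq_concaveEnvelope {X : Type*} [AddCommGroup X] [Module ℝ X]
    (g : X → EReal) (x : X) :
    (⨆ μ : SimpleProb X x, μ.exp g) = concaveEnvelope g x := by
  classical
  apply le_antisymm
  · refine iSup_le fun μ => le_iInf fun ψ => ?_
    have h := jensen_aux ψ.1 ψ.2.1 μ.w μ.nonneg μ.supp (by rw [μ.total]; exact one_pos)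
    rw [μ.total, μ.bary] at h
    simp only [EReal.coe_one, one_mul, inv_one, one_smul] at h
    refine le_trans (Finset.sum_le_sum fun y _ => ?_) h
    exact mul_le_mul_of_nonneg_left (ψ.2.2 y) (by exact_mod_cast μ.nonneg y)
  · refine iInf_le_of_le ⟨_, sup_concave_aux g, fun y => ?_⟩ le_rfl
    refine le_trans ?_ (le_iSup (fun μ : SimpleProb X y => μ.exp g) (SimpleProb.diracAux y))
    simp [SimpleProb.exp, SimpleProb.diracAux]
end

section
/- Fix a real vector space X, an integer T ≥ 1 and f : X^{T+1} → EReal. For 0 ≤ t < T define the operator E_t mapping a function g : X^{t+2} → EReal to E_t(g) : X^{t+1} → EReal by E_t(g)(x₀,…,x_t) = sup_{μ ∈ M(x_t)} μ[g(x₀,…,x_t,·)]. Then for every x₀ ∈ X, the backward composition satisfies (E₀ ∘ E₁ ∘ ⋯ ∘ E_{T−1})(f)(x₀) = sup_{μ ∈ M^T(x₀)} μ[f]. -/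
/-- A finitely supported probability measure on `X^{T+1}` under which the coordinate
process is a martingale in its natural filtration, starting at `x₀`; an element of
`M^T(x₀)` (the law of a simple martingale `M₀, …, M_T` with `M₀ = x₀`).
The martingale property is expressed by testing the increment `π(t+1) - π(t)`
against all functions `h` of the path depending only on the first `t+1` coordinates. -/
structure MartLaw (X : Type*) [AddCommGroup X] [Module ℝ X] (T : ℕ) (x₀ : X) where
  supp : Finset (Fin (T + 1) → X)
  w : (Fin (T + 1) → X) → ℝ
  nonneg : ∀ π, 0 ≤ w π
  zero_off : ∀ π ∉ supp, w π = 0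
  total : ∑ π ∈ supp, w π = 1
  init : ∀ π ∈ supp, w π ≠ 0 → π 0 = x₀
  mart : ∀ t : Fin T, ∀ h : (Fin (T + 1) → X) → ℝ,
    (∀ π π' : Fin (T + 1) → X, (∀ s : Fin (T + 1), s ≤ t.castSucc → π s = π' s) → h π = h π') →
    ∑ π ∈ supp, (w π * h π) • (π t.succ - π t.castSucc) = 0

/-- The integral `μ[f]` of an `EReal`-valued function on path space under a finitely
supported martingale law, as a finite sum in `EReal`. -/
noncomputable def MartLaw.exp {X : Type*} [AddCommGroup X] [Module ℝ X] {T : ℕ} {x₀ : X}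
    (μ : MartLaw X T x₀) (f : (Fin (T + 1) → X) → EReal) : EReal :=
  ∑ π ∈ μ.supp, (μ.w π : EReal) * f π

/-- The operator `E_t`, mapping `g : X^{t+2} → EReal` to `E_t(g) : X^{t+1} → EReal`,
`E_t(g)(x₀,…,x_t) = sup_{μ ∈ M(x_t)} μ[g(x₀,…,x_t,·)]`. -/
noncomputable def Eop {X : Type*} [AddCommGroup X] [Module ℝ X] (t : ℕ)
    (g : (Fin (t + 2) → X) → EReal) : (Fin (t + 1) → X) → EReal :=
  fun x => ⨆ μ : SimpleProb X (x (Fin.last t)), μ.exp fun y => g (Fin.snoc x y)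

/-- The backward composition `E₀ ∘ E₁ ∘ ⋯ ∘ E_{s-1}`, mapping a function of `s+1`
variables to a function of one variable. -/
noncomputable def Ecomp {X : Type*} [AddCommGroup X] [Module ℝ X] :
    (s : ℕ) → ((Fin (s + 1) → X) → EReal) → ((Fin 1 → X) → EReal)
  | 0, g => g
  | s + 1, g => Ecomp s (Eop s g)

section Helpers

open Finset

lemma ereal_mul_sum {ι : Type*} (s : Finset ι) (c : ℝ) (hc : 0 ≤ c) (g : ι → EReal) :
    (c : EReal) * ∑ i ∈ s, g i = ∑ i ∈ s, (c : EReal) * g i := by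
  classical
  induction s using Finset.induction_on with
  | empty => simp
  | insert a s ha ih =>
    rw [Finset.sum_insert ha, Finset.sum_insert ha, ← ih]
    exact EReal.left_distrib_of_nonneg_of_ne_top (by exact_mod_cast hc) (EReal.coe_ne_top c) _ _

lemma ereal_mul_iSup_le {ι : Type*} [Nonempty ι] (c : ℝ) (hc : 0 ≤ c) (g : ι → EReal) :
    (c : EReal) * ⨆ i, g i ≤ ⨆ i, (c : EReal) * g i := by
  rcases hc.eq_or_lt with rfl | hc
  · simp
  · have h0 : (0 : EReal) < c := by exact_mod_cast hc
    have ht := EReal.coe_ne_top c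
    rw [mul_comm, ← EReal.le_div_iff_mul_le h0 ht]
    refine iSup_le fun i => ?_
    rw [EReal.le_div_iff_mul_le h0 ht, mul_comm]
    exact le_iSup (fun i => (c : EReal) * g i) i

lemma ereal_sum_iSup_le {ι : Type*} {κ : ι → Type*} [∀ i, Nonempty (κ i)] (s : Finset ι)
    (g : ∀ i, κ i → EReal) :
    ∑ i ∈ s, ⨆ k, g i k ≤ ⨆ c : ∀ i, κ i, ∑ i ∈ s, g i (c i) := by
  classical
  induction s using Finset.induction_on with
  | empty => simp
  | insert a s ha ih =>
    rw [Finset.sum_insert ha]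
    refine (add_le_add le_rfl ih).trans ?_
    refine EReal.add_le_of_forall_lt fun a' ha' b' hb' => ?_
    obtain ⟨k, hk⟩ := lt_iSup_iff.1 ha'
    obtain ⟨c, hcc⟩ := lt_iSup_iff.1 hb'
    refine le_iSup_of_le (Function.update c a k) ?_
    rw [Finset.sum_insert ha]
    refine add_le_add (by simpa using hk.le) (hcc.le.trans (le_of_eq ?_))
    refine Finset.sum_congr rfl fun i hi => ?_
    rw [Function.update_of_ne (by rintro rfl; exact ha hi)]

variable {X : Type*} [AddCommGroup X] [Module ℝ X]

instance simpleProbNonempty (x : X) : Nonempty (SimpleProb X x) := by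
  classical
  exact ⟨{ supp := {x}
           w := fun y => if y = x then 1 else 0
           nonneg := fun y => by split_ifs <;> norm_num
           zero_off := fun y hy => by simpa using hy
           total := by simp
           bary := by simp }⟩

/-- Appending a last coordinate, as an embedding. -/
def snocEmb (X : Type*) (T : ℕ) : (Σ _ : Fin (T + 1) → X, X) ↪ (Fin (T + 2) → X) where
  toFun q := Fin.snoc (α := fun _ => X) q.1 q.2
  inj' := by
    rintro ⟨p, x⟩ ⟨q, y⟩ h
    obtain ⟨h1, h2⟩ := Fin.snoc_injective2 h
    subst h1; subst h2; rfl

lemma snocEmb_apply (T : ℕ) (p : Fin (T + 1) → X) (y : X) :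
    snocEmb X T ⟨p, y⟩ = Fin.snoc (α := fun _ => X) p y := rfl

lemma kernel_init_snoc {T : ℕ}
    (ν : ∀ p : Fin (T + 1) → X, SimpleProb X (p (Fin.last T))) (p : Fin (T + 1) → X) (y : X) :
    (ν (Fin.init (Fin.snoc (α := fun _ => X) p y))).w = (ν p).w := by
  have h : Fin.init (Fin.snoc (α := fun _ => X) p y) = p := Fin.init_snoc _ _
  exact congrArg (fun q => (ν q).w) h

/-- Extension of a martingale law by a kernel. -/
noncomputable def MartLaw.extend {T : ℕ} {x₀ : X} (μ : MartLaw X T x₀)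
    (ν : ∀ p : Fin (T + 1) → X, SimpleProb X (p (Fin.last T))) : MartLaw X (T + 1) x₀ where
  supp := (μ.supp.sigma fun p => (ν p).supp).map (snocEmb X T)
  w π := μ.w (Fin.init π) * (ν (Fin.init π)).w (π (Fin.last (T + 1)))
  nonneg π := mul_nonneg (μ.nonneg _) ((ν _).nonneg _)
  zero_off π hπ := by
    by_contra h
    have h1 := left_ne_zero_of_mul h
    have h2 := right_ne_zero_of_mul h
    apply hπ
    rw [Finset.mem_map]
    refine ⟨⟨Fin.init π, π (Fin.last _)⟩, ?_, Fin.snoc_init_self π⟩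
    rw [Finset.mem_sigma]
    exact ⟨by_contra fun h => h1 (μ.zero_off _ h), by_contra fun h => h2 ((ν _).zero_off _ h)⟩
  total := by
    rw [Finset.sum_map, Finset.sum_sigma, ← μ.total]
    refine Finset.sum_congr rfl fun p _ => ?_
    simp only [snocEmb_apply, kernel_init_snoc, Fin.init_snoc, Fin.snoc_last]
    rw [← Finset.mul_sum, (ν p).total, mul_one]
  init π hπ h := by
    have h1 := left_ne_zero_of_mul h
    exact μ.init _ (by_contra fun h => h1 (μ.zero_off _ h)) h1
  mart t h hh := by
    rw [Finset.sum_map, Finset.sum_sigma]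
    simp only [snocEmb_apply, kernel_init_snoc, Fin.init_snoc, Fin.snoc_last]
    have hconst : ∀ (p : Fin (T + 1) → X) (y : X),
        h (Fin.snoc (α := fun _ => X) p y) = h (Fin.snoc (α := fun _ => X) p 0) := by
      intro p y
      apply hh
      intro s hs
      induction s using Fin.lastCases with
      | last =>
        exfalso
        have h1 := t.is_lt
        simp [Fin.le_def] at hs
        omega
      | cast i => simp
    induction t using Fin.lastCases with
    | last =>
      refine Finset.sum_eq_zero fun p _ => ?_
      have : ∀ y ∈ (ν p).supp, (μ.w p * (ν p).w y * h (Fin.snoc (α := fun _ => X) p y)) •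
          (Fin.snoc (α := fun _ => X) p y (Fin.last T).succ -
            Fin.snoc (α := fun _ => X) p y (Fin.last T).castSucc) =
          (μ.w p * h (Fin.snoc (α := fun _ => X) p 0)) •
            ((ν p).w y • y - (ν p).w y • p (Fin.last T)) := by
        intro y _
        rw [hconst p y, Fin.succ_last, Fin.snoc_last, Fin.snoc_castSucc, ← smul_sub, smul_smul]
        congr 1; ring
      rw [Finset.sum_congr rfl this, ← Finset.smul_sum, Finset.sum_sub_distrib,
        ← Finset.sum_smul, (ν p).total, (ν p).bary, one_smul, sub_self, smul_zero]
    | cast t =>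
      rw [← μ.mart t (fun p => h (Fin.snoc (α := fun _ => X) p 0))]
      · refine Finset.sum_congr rfl fun p _ => ?_
        have : ∀ y ∈ (ν p).supp, (μ.w p * (ν p).w y * h (Fin.snoc (α := fun _ => X) p y)) •
            (Fin.snoc (α := fun _ => X) p y t.castSucc.succ -
              Fin.snoc (α := fun _ => X) p y t.castSucc.castSucc) =
            (ν p).w y • ((μ.w p * h (Fin.snoc (α := fun _ => X) p 0)) •
              (p t.succ - p t.castSucc)) := by
          intro y _
          rw [hconst p y, Fin.succ_castSucc, Fin.snoc_castSucc, Fin.snoc_castSucc, smul_smul]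
          congr 1; ring
        rw [Finset.sum_congr rfl this, ← Finset.sum_smul, (ν p).total, one_smul]
      · intro p p' hp
        apply hh
        intro s hs
        induction s using Fin.lastCases with
        | last => simp
        | cast i =>
          simp only [Fin.snoc_castSucc]
          exact hp i (by simpa [Fin.le_def] using hs)

lemma MartLaw.extend_exp {T : ℕ} {x₀ : X} (μ : MartLaw X T x₀)
    (ν : ∀ p : Fin (T + 1) → X, SimpleProb X (p (Fin.last T))) (f : (Fin (T + 2) → X) → EReal) :
    (μ.extend ν).exp f =
      ∑ p ∈ μ.supp, (μ.w p : EReal) * (ν p).exp fun y => f (Fin.snoc p y) := by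
  simp only [MartLaw.exp, MartLaw.extend, SimpleProb.exp]
  rw [Finset.sum_map, Finset.sum_sigma]
  refine Finset.sum_congr rfl fun p _ => ?_
  simp only [snocEmb_apply, kernel_init_snoc, Fin.init_snoc, Fin.snoc_last]
  rw [ereal_mul_sum _ _ (μ.nonneg p)]
  refine Finset.sum_congr rfl fun y _ => ?_
  rw [EReal.coe_mul, mul_assoc]

open Classical in
/-- The marginal of a martingale law on the first coordinates. -/
noncomputable def MartLaw.marg {T : ℕ} {x₀ : X} (μ : MartLaw X (T + 1) x₀) : MartLaw X T x₀ where
  supp := μ.supp.image (fun π => Fin.init π)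
  w p := ∑ π ∈ μ.supp with Fin.init π = p, μ.w π
  nonneg p := Finset.sum_nonneg fun π _ => μ.nonneg π
  zero_off p hp := by
    rw [Finset.filter_false_of_mem, Finset.sum_empty]
    rintro π hπ rfl
    exact hp (Finset.mem_image_of_mem _ hπ)
  total := by
    rw [← μ.total]
    exact Finset.sum_fiberwise_of_maps_to (fun π hπ => Finset.mem_image_of_mem _ hπ) _
  init p _ hp := by
    obtain ⟨π, hπ, hw⟩ := Finset.exists_ne_zero_of_sum_ne_zero hp
    rw [Finset.mem_filter] at hπ
    rw [← hπ.2]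
    exact μ.init π hπ.1 hw
  mart t h hh := by
    rw [← μ.mart t.castSucc (fun π => h (Fin.init π)) ?_]
    · rw [← Finset.sum_fiberwise_of_maps_to (s := μ.supp)
        (t := μ.supp.image (fun π => Fin.init π)) (g := fun π => Fin.init π)
        (fun π hπ => Finset.mem_image_of_mem _ hπ)]
      refine Finset.sum_congr rfl fun p _ => ?_
      rw [Finset.sum_mul, Finset.sum_smul]
      refine Finset.sum_congr rfl fun π hπ => ?_
      rw [Finset.mem_filter] at hπ
      rw [← hπ.2]
      rfl
    · intro π π' hp
      apply hh
      intro s hs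
      exact hp s.castSucc (by simpa [Fin.le_def] using hs)

open Classical in
lemma MartLaw.fiber_le {T : ℕ} {x₀ : X} (μ : MartLaw X (T + 1) x₀)
    (f : (Fin (T + 2) → X) → EReal) (p : Fin (T + 1) → X) :
    ∑ π ∈ μ.supp with Fin.init π = p, (μ.w π : EReal) * f π ≤
      (μ.marg.w p : EReal) * Eop T f p := by
  set W : ℝ := μ.marg.w p with hW
  have hWs : W = ∑ π ∈ μ.supp with Fin.init π = p, μ.w π := rfl
  have hW0 : 0 ≤ W := μ.marg.nonneg p
  rcases hW0.eq_or_lt with h0 | hpos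
  · rw [← h0]
    rw [hWs, eq_comm, Finset.sum_eq_zero_iff_of_nonneg (fun π _ => μ.nonneg π)] at h0
    rw [Finset.sum_eq_zero]
    · simp
    · intro π hπ
      rw [h0 π hπ]; simp
  have hsnoc : ∀ π ∈ μ.supp.filter (fun π => Fin.init π = p),
      (Fin.snoc p (π (Fin.last (T + 1))) : Fin (T + 2) → X) = π := by
    intro π hπ
    rw [Finset.mem_filter] at hπ
    rw [← hπ.2]
    exact Fin.snoc_init_self π
  have hinj : Set.InjOn (fun π : Fin (T + 2) → X => π (Fin.last (T + 1)))
      (μ.supp.filter (fun π => Fin.init π = p)) := by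
    intro π hπ π' hπ' h
    rw [← hsnoc π hπ, ← hsnoc π' hπ']
    simp only at h
    rw [h]
  let ν : SimpleProb X (p (Fin.last T)) :=
    { supp := (μ.supp.filter (fun π => Fin.init π = p)).image (fun π => π (Fin.last (T + 1)))
      w := fun y => W⁻¹ * μ.w (Fin.snoc p y)
      nonneg := fun y => mul_nonneg (inv_nonneg.2 hW0) (μ.nonneg _)
      zero_off := by
        intro y hy
        rw [μ.zero_off, mul_zero]
        intro hmem
        apply hy
        rw [Finset.mem_image]
        refine ⟨Fin.snoc p y, ?_, by simp⟩
        rw [Finset.mem_filter]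
        exact ⟨hmem, by simp⟩
      total := by
        rw [Finset.sum_image hinj, ← Finset.mul_sum,
          Finset.sum_congr rfl (fun π hπ => by rw [hsnoc π hπ]), ← hWs, inv_mul_cancel₀ hpos.ne']
      bary := by
        rw [Finset.sum_image hinj]
        have h1 := μ.mart (Fin.last T) (fun π => if Fin.init π = p then 1 else 0) (by
          intro π π' hp
          have : (Fin.init π : Fin (T + 1) → X) = Fin.init π' := by
            ext i
            exact hp i.castSucc (by simpa [Fin.le_def] using Nat.lt_succ_iff.1 i.is_lt)
          simp only [this])
        have h2 : ∑ π ∈ μ.supp with Fin.init π = p,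
            μ.w π • (π (Fin.last (T + 1)) - p (Fin.last T)) = 0 := by
          rw [← h1, Finset.sum_filter]
          refine Finset.sum_congr rfl fun π _ => ?_
          split_ifs with hc
          · rw [← hc, mul_one]; rfl
          · simp
        simp only [smul_sub, Finset.sum_sub_distrib, ← Finset.sum_smul] at h2
        rw [← hWs, sub_eq_zero] at h2
        have h3 : ∀ π ∈ μ.supp.filter (fun π => Fin.init π = p),
            (W⁻¹ * μ.w (Fin.snoc p (π (Fin.last (T + 1))))) • π (Fin.last (T + 1)) =
              W⁻¹ • (μ.w π • π (Fin.last (T + 1))) := by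
          intro π hπ
          rw [hsnoc π hπ, smul_smul]
        rw [Finset.sum_congr rfl h3, ← Finset.smul_sum, h2, smul_smul,
          inv_mul_cancel₀ hpos.ne', one_smul] }
  have hE : ν.exp (fun y => f (Fin.snoc p y)) ≤ Eop T f p :=
    le_iSup (fun ν : SimpleProb X (p (Fin.last T)) => ν.exp fun y => f (Fin.snoc p y)) ν
  refine le_trans (le_of_eq ?_)
    (mul_le_mul_of_nonneg_left hE (by exact_mod_cast hW0 : (0 : EReal) ≤ W))
  simp only [SimpleProb.exp, ν]
  rw [Finset.sum_image hinj, ereal_mul_sum _ _ hW0]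
  refine Finset.sum_congr rfl fun π hπ => ?_
  rw [hsnoc π hπ, ← mul_assoc, ← EReal.coe_mul, ← mul_assoc, mul_inv_cancel₀ hpos.ne', one_mul]

lemma MartLaw.exp_le_marg {T : ℕ} {x₀ : X} (μ : MartLaw X (T + 1) x₀)
    (f : (Fin (T + 2) → X) → EReal) : μ.exp f ≤ μ.marg.exp (Eop T f) := by
  classical
  unfold MartLaw.exp
  rw [← Finset.sum_fiberwise_of_maps_to (s := μ.supp)
    (t := μ.marg.supp) (g := fun π => Fin.init π)
    (fun π hπ => by
      simp only [MartLaw.marg]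
      exact Finset.mem_image_of_mem _ hπ)]
  refine Finset.sum_le_sum fun p _ => ?_
  convert μ.fiber_le f p

lemma iSup_exp_Eop {T : ℕ} {x₀ : X} (f : (Fin (T + 2) → X) → EReal) :
    (⨆ μ : MartLaw X T x₀, μ.exp (Eop T f)) = ⨆ μ : MartLaw X (T + 1) x₀, μ.exp f := by
  apply le_antisymm
  · refine iSup_le fun μ => ?_
    have h1 : μ.exp (Eop T f) ≤ ∑ p ∈ μ.supp, ⨆ ν : SimpleProb X (p (Fin.last T)),
        (μ.w p : EReal) * ν.exp fun y => f (Fin.snoc p y) :=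
      Finset.sum_le_sum fun p _ => ereal_mul_iSup_le _ (μ.nonneg p) _
    refine h1.trans ((ereal_sum_iSup_le _ _).trans (iSup_le fun ν => ?_))
    rw [← μ.extend_exp ν f]
    exact le_iSup (fun μ : MartLaw X (T + 1) x₀ => μ.exp f) _
  · exact iSup_le fun μ => (μ.exp_le_marg f).trans
      (le_iSup (fun μ : MartLaw X T x₀ => μ.exp (Eop T f)) μ.marg)

lemma Ecomp_zero_case (f : (Fin 1 → X) → EReal) (x₀ : X) :
    f (fun _ => x₀) = ⨆ μ : MartLaw X 0 x₀, μ.exp f := by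
  classical
  apply le_antisymm
  · let μ : MartLaw X 0 x₀ :=
      { supp := {fun _ => x₀}
        w := fun π => if π = fun _ => x₀ then 1 else 0
        nonneg := fun y => by split_ifs <;> norm_num
        zero_off := fun y hy => by simpa using hy
        total := by simp
        init := fun π hπ _ => by rw [Finset.mem_singleton] at hπ; rw [hπ]
        mart := fun t => t.elim0 }
    refine le_iSup_of_le μ ?_
    simp [MartLaw.exp, μ]
  · refine iSup_le fun μ => ?_
    have h0 : ∀ π ∈ μ.supp, π ≠ (fun _ => x₀) → μ.w π = 0 := by
      intro π hπ hne
      by_contra hw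
      apply hne
      ext i
      rw [Fin.eq_zero i]
      exact μ.init π hπ hw
    have h1 : μ.w (fun _ => x₀) = 1 := by
      rw [← μ.total]
      exact (Finset.sum_eq_single _ h0 (μ.zero_off _)).symm
    unfold MartLaw.exp
    rw [Finset.sum_eq_single (fun _ => x₀)]
    · rw [h1]; simp
    · intro π hπ hne
      rw [h0 π hπ hne]; simp
    · intro hn
      rw [μ.zero_off _ hn]; simp

end Helpers

/-- For `T ≥ 1` and `f : X^{T+1} → EReal`, the backward composition
`(E₀ ∘ ⋯ ∘ E_{T-1})(f)(x₀)` equals `sup_{μ ∈ M^T(x₀)} μ[f]`. -/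
theorem Ecomp_eq_sup_martLaw {X : Type*} [AddCommGroup X] [Module ℝ X]
    (T : ℕ) (hT : 1 ≤ T) (f : (Fin (T + 1) → X) → EReal) (x₀ : X) :
    Ecomp T f (fun _ => x₀) = ⨆ μ : MartLaw X T x₀, μ.exp f := by
  clear hT
  induction T with
  | zero => exact Ecomp_zero_case f x₀
  | succ T ih => exact (ih (Eop T f)).trans (iSup_exp_Eop f)
end

section
/- Let X be a real vector space, Z a nonempty set, φ : Z × X → Z with φ(z,0) = z for all z, and f : Z → EReal. Then the sequence (A^n f)_{n∈ℕ} is pointwise nondecreasing, so the pointwise limit A^∞f(z) := lim_{n→∞} A^n f(z) exists in EReal; moreover A(A^∞f) = A^∞f, A^∞f ≥ f, and A^∞f is the smallest fixed point of A dominating f: any g : Z → EReal with Ag = g and g ≥ f satisfies g ≥ A^∞f pointwise. -/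
/-- The operator `A`: `Ag(z) = (g ∘ φ(z,·))^♯(0)`. -/
noncomputable def Aop {X Z : Type*} [AddCommGroup X] [Module ℝ X]
    (φ : Z → X → Z) (g : Z → EReal) : Z → EReal :=
  fun z => concaveEnvelope (fun d => g (φ z d)) 0

theorem le_concaveEnvelope {X : Type*} [AddCommGroup X] [Module ℝ X]
    (g : X → EReal) (x : X) : g x ≤ concaveEnvelope g x :=
  le_iInf fun ψ => ψ.2.2 x

theorem concaveEnvelope_le {X : Type*} [AddCommGroup X] [Module ℝ X]
    {g ψ : X → EReal} (h : IsEConcave ψ) (h' : ∀ y, g y ≤ ψ y) (x : X) :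
    concaveEnvelope g x ≤ ψ x :=
  iInf_le (fun ψ : {ψ : X → EReal // IsEConcave ψ ∧ ∀ y, g y ≤ ψ y} => ψ.1 x) ⟨ψ, h, h'⟩

theorem concaveEnvelope_concave {X : Type*} [AddCommGroup X] [Module ℝ X]
    (g : X → EReal) : IsEConcave (concaveEnvelope g) := by
  intro x y a b ha hb hab
  refine le_iInf fun ψ => le_trans ?_ (ψ.2.1 x y a b ha hb hab)
  exact add_le_add
    (mul_le_mul_of_nonneg_left (iInf_le _ ψ) (EReal.coe_nonneg.2 ha))
    (mul_le_mul_of_nonneg_left (iInf_le _ ψ) (EReal.coe_nonneg.2 hb))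

theorem concaveEnvelope_mono {X : Type*} [AddCommGroup X] [Module ℝ X]
    {g h : X → EReal} (hgh : ∀ y, g y ≤ h y) (x : X) :
    concaveEnvelope g x ≤ concaveEnvelope h x :=
  concaveEnvelope_le (concaveEnvelope_concave h)
    (fun y => (hgh y).trans (le_concaveEnvelope h y)) x

theorem exists_lt_mul_of_lt_mul_iSup {a : ℝ} (ha : 0 < a) {u : ℕ → EReal} {c : EReal}
    (hc : c < (a : EReal) * ⨆ n, u n) : ∃ n, c < (a : EReal) * u n := by
  have h0 : (0 : EReal) < a := EReal.coe_pos.2 ha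
  by_contra! hn
  refine absurd hc (not_lt.2 ?_)
  rw [mul_comm, ← EReal.le_div_iff_mul_le h0 (EReal.coe_ne_top a)]
  refine iSup_le fun n => ?_
  rw [EReal.le_div_iff_mul_le h0 (EReal.coe_ne_top a), mul_comm]
  exact hn n

theorem iSup_concave {X : Type*} [AddCommGroup X] [Module ℝ X]
    (h : ℕ → X → EReal) (hc : ∀ n, IsEConcave (h n)) (hm : ∀ x, Monotone fun n => h n x) :
    IsEConcave fun x => ⨆ n, h n x := by
  intro x y a b ha hb hab
  rcases ha.eq_or_lt with rfl | ha'
  · obtain rfl : b = 1 := by linarith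
    simp
  rcases hb.eq_or_lt with rfl | hb'
  · obtain rfl : a = 1 := by linarith
    simp
  refine EReal.add_le_of_forall_lt fun c hc' d hd => ?_
  obtain ⟨n, hn⟩ := exists_lt_mul_of_lt_mul_iSup ha' hc'
  obtain ⟨m, hm'⟩ := exists_lt_mul_of_lt_mul_iSup hb' hd
  refine le_trans ?_ (le_iSup _ (max n m))
  refine le_trans ?_ (hc (max n m) x y a b ha hb hab)
  exact add_le_add
    (hn.le.trans (mul_le_mul_of_nonneg_left (hm x (le_max_left n m)) (EReal.coe_nonneg.2 ha)))
    (hm'.le.trans (mul_le_mul_of_nonneg_left (hm y (le_max_right n m)) (EReal.coe_nonneg.2 hb)))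

/-- The sequence `(Aⁿf)ₙ` is pointwise nondecreasing, hence converges
pointwise to `A^∞f := ⨆ n, Aⁿf`; moreover `A(A^∞f) = A^∞f`, `A^∞f ≥ f`, and `A^∞f` is
the smallest fixed point of `A` dominating `f`. -/
theorem Aop_iterate_limit {X Z : Type*} [AddCommGroup X] [Module ℝ X] [Nonempty Z]
    (φ : Z → X → Z) (hφ : ∀ z, φ z 0 = z) (f : Z → EReal) :
    (∀ z, Monotone fun n : ℕ => (Aop φ)^[n] f z) ∧
    (∀ z, Filter.Tendsto (fun n : ℕ => (Aop φ)^[n] f z) Filter.atTop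
      (nhds (⨆ n : ℕ, (Aop φ)^[n] f z))) ∧
    Aop φ (fun z => ⨆ n : ℕ, (Aop φ)^[n] f z) = (fun z => ⨆ n : ℕ, (Aop φ)^[n] f z) ∧
    (∀ z, f z ≤ ⨆ n : ℕ, (Aop φ)^[n] f z) ∧
    (∀ g : Z → EReal, Aop φ g = g → (∀ z, f z ≤ g z) →
      ∀ z, (⨆ n : ℕ, (Aop φ)^[n] f z) ≤ g z) := by
  have hle : ∀ (g : Z → EReal) z, g z ≤ Aop φ g z := fun g z => by
    have := le_concaveEnvelope (fun d => g (φ z d)) 0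
    simpa only [hφ, Aop] using this
  have hmono : ∀ z, Monotone fun n : ℕ => (Aop φ)^[n] f z := fun z =>
    monotone_nat_of_le_succ fun n => by
      simp only [Function.iterate_succ_apply']
      exact hle _ z
  refine ⟨hmono, fun z => tendsto_atTop_iSup (hmono z), ?_,
    fun z => le_iSup (fun n : ℕ => (Aop φ)^[n] f z) 0, ?_⟩
  · funext z
    refine le_antisymm ?_ (hle (fun z => ⨆ n : ℕ, (Aop φ)^[n] f z) z)
    have h1 := concaveEnvelope_le (g := fun d => ⨆ n : ℕ, (Aop φ)^[n] f (φ z d))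
      (iSup_concave (fun n => concaveEnvelope fun d => (Aop φ)^[n] f (φ z d))
        (fun n => concaveEnvelope_concave _)
        (fun x n m hnm => concaveEnvelope_mono (fun d => hmono (φ z d) hnm) x))
      (fun d => iSup_mono fun n => le_concaveEnvelope (fun d => (Aop φ)^[n] f (φ z d)) d) 0
    refine le_trans h1 (iSup_le fun n => ?_)
    refine le_trans (le_of_eq ?_) (le_iSup (fun n : ℕ => (Aop φ)^[n] f z) (n + 1))
    simp only [Function.iterate_succ_apply']
    rfl
  · intro g hg hfg z
    refine iSup_le fun n => ?_
    induction n generalizing z with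
    | zero => exact hfg z
    | succ n ih =>
      rw [Function.iterate_succ_apply', ← hg]
      exact concaveEnvelope_mono (fun d => ih (φ z d)) 0
end

section
/- Let X be a real vector space, Z a nonempty set, φ : Z × X → Z with φ(z,0) = z for all z, and f : Z → EReal. Suppose u : Z → EReal satisfies f ≤ u and Au ≤ u pointwise. Then for every x₀ ∈ X, z₀ ∈ Z, T ∈ ℕ and every μ ∈ M^T(x₀), one has μ[f(Z_T)] ≤ u(z₀), where Z_T is the state process along the path (x₀,…,x_T) defined by Z₀ = z₀, Z_{t+1} = φ(Z_t, x_{t+1} − x_t). -/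
/-- The state process: `Z₀ = z₀`, `Z_{t+1} = φ(Z_t, x_{t+1} - x_t)` along a path `π : ℕ → X`. -/
def stateProc {X Z : Type*} [AddCommGroup X] (φ : Z → X → Z) (z₀ : Z) (π : ℕ → X) : ℕ → Z
  | 0 => z₀
  | t + 1 => φ (stateProc φ z₀ π t) (π (t + 1) - π t)

/-- Extension of a path `x₀, …, x_T` to a path indexed by `ℕ` (constant after time `T`). -/
def pathExt {X : Type*} {T : ℕ} (π : Fin (T + 1) → X) : ℕ → X :=
  fun s => if h : s ≤ T then π ⟨s, Nat.lt_succ_of_le h⟩ else π (Fin.last T)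

lemma aux_mul_add (a : ℝ) (ha : 0 ≤ a) (x y : EReal) :
    (a : EReal) * (x + y) = (a : EReal) * x + (a : EReal) * y :=
  EReal.left_distrib_of_nonneg_of_ne_top (by exact_mod_cast ha) (EReal.coe_ne_top a) x y

lemma aux_add_mul (a b : ℝ) (ha : 0 ≤ a) (hb : 0 ≤ b) (x : EReal) :
    ((a + b : ℝ) : EReal) * x = (a : EReal) * x + (b : EReal) * x := by
  rw [EReal.coe_add]
  exact EReal.right_distrib_of_nonneg (by exact_mod_cast ha) (by exact_mod_cast hb)

lemma aux_sum_mul {ι : Type*} (s : Finset ι) (w : ι → ℝ) (hw : ∀ i, 0 ≤ w i) (x : EReal) :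
    ∑ i ∈ s, (w i : EReal) * x = ((∑ i ∈ s, w i : ℝ) : EReal) * x := by
  classical
  induction s using Finset.induction_on with
  | empty => simp
  | insert i s hi ih =>
    rw [Finset.sum_insert hi, Finset.sum_insert hi, ih,
      aux_add_mul _ _ (hw i) (Finset.sum_nonneg fun j _ => hw j)]

lemma aux_mul_mono (a : ℝ) (ha : 0 ≤ a) {x y : EReal} (h : x ≤ y) :
    (a : EReal) * x ≤ (a : EReal) * y :=
  mul_le_mul_of_nonneg_left h (by exact_mod_cast ha)

lemma aux_jensen {X ι : Type*} [AddCommGroup X] [Module ℝ X] (ψ : X → EReal)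
    (hψ : IsEConcave ψ) (w : ι → ℝ) (hw : ∀ i, 0 ≤ w i) (d : ι → X) (s : Finset ι)
    (hpos : 0 < ∑ i ∈ s, w i) :
    ∑ i ∈ s, (w i : EReal) * ψ (d i) ≤
      ((∑ i ∈ s, w i : ℝ) : EReal) * ψ ((∑ i ∈ s, w i)⁻¹ • ∑ i ∈ s, w i • d i) := by
  classical
  induction s using Finset.induction_on with
  | empty => simp at hpos
  | insert i s hi ih =>
    rw [Finset.sum_insert hi] at hpos
    rw [Finset.sum_insert hi, Finset.sum_insert hi, Finset.sum_insert hi]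
    have hs0 : 0 ≤ ∑ j ∈ s, w j := Finset.sum_nonneg fun j _ => hw j
    rcases hs0.eq_or_lt with h0 | h0
    · have hz : ∀ j ∈ s, w j = 0 :=
        (Finset.sum_eq_zero_iff_of_nonneg fun j _ => hw j).1 h0.symm
      have e1 : ∑ j ∈ s, (w j : EReal) * ψ (d j) = 0 :=
        Finset.sum_eq_zero fun j hj => by simp [hz j hj]
      have e2 : ∑ j ∈ s, w j • d j = 0 :=
        Finset.sum_eq_zero fun j hj => by simp [hz j hj]
      rw [← h0, add_zero] at hpos
      rw [e1, e2, ← h0, add_zero, add_zero, add_zero, inv_smul_smul₀ hpos.ne']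
    · have ih := ih h0
      set W := ∑ j ∈ s, w j with hW
      set S := ∑ j ∈ s, w j • d j with hS
      set V := w i + W with hV
      have hc := hψ (d i) (W⁻¹ • S) (V⁻¹ * w i) (V⁻¹ * W)
        (mul_nonneg (inv_nonneg.2 hpos.le) (hw i)) (mul_nonneg (inv_nonneg.2 hpos.le) h0.le)
        (by rw [← mul_add, ← hV, inv_mul_cancel₀ hpos.ne'])
      have hc2 := aux_mul_mono V hpos.le hc
      rw [aux_mul_add V hpos.le, ← mul_assoc, ← mul_assoc, ← EReal.coe_mul, ← EReal.coe_mul,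
        mul_inv_cancel_left₀ hpos.ne', mul_inv_cancel_left₀ hpos.ne', mul_smul, mul_smul,
        smul_inv_smul₀ h0.ne', ← smul_add] at hc2
      exact (add_le_add le_rfl ih).trans hc2

lemma aux_env {X ι : Type*} [AddCommGroup X] [Module ℝ X] (g : X → EReal)
    (w : ι → ℝ) (hw : ∀ i, 0 ≤ w i) (d : ι → X) (s : Finset ι)
    (hd : ∑ i ∈ s, w i • d i = 0) :
    ∑ i ∈ s, (w i : EReal) * g (d i) ≤
      ((∑ i ∈ s, w i : ℝ) : EReal) * concaveEnvelope g 0 := by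
  have hs0 : 0 ≤ ∑ j ∈ s, w j := Finset.sum_nonneg fun j _ => hw j
  rcases hs0.eq_or_lt with h0 | h0
  · have hz : ∀ j ∈ s, w j = 0 :=
      (Finset.sum_eq_zero_iff_of_nonneg fun j _ => hw j).1 h0.symm
    rw [← h0, Finset.sum_eq_zero fun j hj => by simp [hz j hj]]
    simp
  · set W := ∑ j ∈ s, w j with hW
    have key : ((W⁻¹ : ℝ) : EReal) * ∑ i ∈ s, (w i : EReal) * g (d i) ≤ concaveEnvelope g 0 := by
      refine le_iInf fun ψ => ?_
      have h1 : ∑ i ∈ s, (w i : EReal) * g (d i) ≤ (W : EReal) * ψ.1 0 := by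
        have := aux_jensen ψ.1 ψ.2.1 w hw d s h0
        rw [hd, smul_zero] at this
        exact (Finset.sum_le_sum fun i _ => aux_mul_mono _ (hw i) (ψ.2.2 (d i))).trans this
      have h2 := aux_mul_mono W⁻¹ (inv_nonneg.2 h0.le) h1
      rwa [← mul_assoc, ← EReal.coe_mul, inv_mul_cancel₀ h0.ne', EReal.coe_one, one_mul] at h2
    have h3 := aux_mul_mono W h0.le key
    rwa [← mul_assoc, ← EReal.coe_mul, mul_inv_cancel₀ h0.ne', EReal.coe_one, one_mul] at h3

lemma aux_state {X Z : Type*} [AddCommGroup X] (φ : Z → X → Z) (z₀ : Z) (π π' : ℕ → X) (t : ℕ)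
    (h : ∀ s ≤ t, π s = π' s) : stateProc φ z₀ π t = stateProc φ z₀ π' t := by
  induction t with
  | zero => rfl
  | succ t ih =>
    simp only [stateProc]
    rw [ih fun s hs => h s (by omega), h (t + 1) le_rfl, h t (by omega)]

lemma aux_step {X Z : Type*} [AddCommGroup X] [Module ℝ X]
    (φ : Z → X → Z) (u : Z → EReal) (hAu : ∀ z, Aop φ u z ≤ u z)
    (x₀ : X) (z₀ : Z) (T : ℕ) (μ : MartLaw X T x₀) (t : ℕ) (ht : t < T) :
    (μ.exp fun π => u (stateProc φ z₀ (pathExt π) (t + 1))) ≤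
      μ.exp fun π => u (stateProc φ z₀ (pathExt π) t) := by
  classical
  let t' : Fin T := ⟨t, ht⟩
  let pr : (Fin (T + 1) → X) → ({s : Fin (T + 1) // s ≤ t'.castSucc} → X) := fun π s => π s.1
  unfold MartLaw.exp
  rw [← Finset.sum_fiberwise_of_maps_to (s := μ.supp) (t := μ.supp.image pr) (g := pr)
      (fun π hπ => Finset.mem_image_of_mem pr hπ),
    ← Finset.sum_fiberwise_of_maps_to (s := μ.supp) (t := μ.supp.image pr) (g := pr)
      (fun π hπ => Finset.mem_image_of_mem pr hπ)]
  refine Finset.sum_le_sum fun p hp => ?_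
  obtain ⟨π₀, -, rfl⟩ := Finset.mem_image.1 hp
  have hst : ∀ π, pr π = pr π₀ →
      stateProc φ z₀ (pathExt π) t = stateProc φ z₀ (pathExt π₀) t := by
    intro π hπ
    refine aux_state _ _ _ _ _ fun s hs => ?_
    have hsT : s ≤ T := by omega
    simp only [pathExt, hsT, dif_pos]
    exact congrFun hπ ⟨⟨s, Nat.lt_succ_of_le hsT⟩, by simpa [Fin.le_def, t'] using hs⟩
  have hd : ∑ π ∈ μ.supp.filter (fun π => pr π = pr π₀),
      μ.w π • (π t'.succ - π t'.castSucc) = 0 := by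
    have := μ.mart t' (fun π => if pr π = pr π₀ then 1 else 0) (by
      intro π π' h
      have : pr π = pr π' := funext fun s => h s.1 s.2
      simp only [this])
    rw [← this, Finset.sum_filter]
    refine Finset.sum_congr rfl fun π _ => ?_
    split_ifs <;> simp
  set z := stateProc φ z₀ (pathExt π₀) t with hz
  have hinc : ∀ π : Fin (T + 1) → X,
      pathExt π (t + 1) - pathExt π t = π t'.succ - π t'.castSucc := by
    intro π
    have h1 : t + 1 ≤ T := ht
    have h2 : t ≤ T := ht.le
    simp only [pathExt, h1, h2, dif_pos]
    rfl
  calc _ = ∑ π ∈ μ.supp.filter (fun π => pr π = pr π₀),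
        (μ.w π : EReal) * u (φ z (π t'.succ - π t'.castSucc)) := by
        refine Finset.sum_congr rfl fun π hπ => ?_
        simp only [stateProc, hst π (Finset.mem_filter.1 hπ).2, hinc]
    _ ≤ _ := aux_env (fun d => u (φ z d)) μ.w μ.nonneg
        (fun π => π t'.succ - π t'.castSucc) _ hd
    _ ≤ _ := aux_mul_mono _ (Finset.sum_nonneg fun j _ => μ.nonneg j) (hAu z)
    _ = _ := (aux_sum_mul _ _ μ.nonneg _).symm
    _ = _ := Finset.sum_congr rfl fun π hπ => by
        simp only [hst π (Finset.mem_filter.1 hπ).2]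

/-- If `u` satisfies `f ≤ u` and `Au ≤ u` pointwise, then for every
martingale law `μ ∈ M^T(x₀)` one has `μ[f(Z_T)] ≤ u(z₀)`. -/
theorem exp_state_le_of_superFixed {X Z : Type*} [AddCommGroup X] [Module ℝ X] [Nonempty Z]
    (φ : Z → X → Z) (hφ : ∀ z, φ z 0 = z) (f u : Z → EReal)
    (hfu : ∀ z, f z ≤ u z) (hAu : ∀ z, Aop φ u z ≤ u z)
    (x₀ : X) (z₀ : Z) (T : ℕ) (μ : MartLaw X T x₀) :
    (μ.exp fun π => f (stateProc φ z₀ (pathExt π) T)) ≤ u z₀ := by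
  have key : ∀ t ≤ T, (μ.exp fun π => u (stateProc φ z₀ (pathExt π) t)) ≤ u z₀ := by
    intro t
    induction t with
    | zero =>
      intro _
      simp only [MartLaw.exp, stateProc]
      rw [aux_sum_mul _ _ μ.nonneg, μ.total, EReal.coe_one, one_mul]
    | succ t ih =>
      intro ht
      exact (aux_step φ u hAu x₀ z₀ T μ t ht).trans (ih (by omega))
  exact (Finset.sum_le_sum fun π _ => aux_mul_mono _ (μ.nonneg π) (hfu _)).trans (key T le_rfl)
end

section
/- Let X be a real vector space and let Z be a subset of a real vector space that is closed under multiplication by nonnegative scalars (a cone). Suppose φ : Z × X → Z satisfies φ(z,0) = z and the degree-one homogeneity φ(λz, λd) = λ φ(z,d) for all λ ≥ 0, z ∈ Z, d ∈ X. Let p > 0. If f : Z → EReal is positively homogeneous of degree p, i.e. f(λz) = λ^p · f(z) for all λ > 0 and z ∈ Z, then Af and A^∞f := lim_n A^n f are positively homogeneous of degree p as well. -/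
theorem ereal_inv_cancel (k : ℝ) (hk : 0 < k) (x : EReal) :
    ((k⁻¹ : ℝ) : EReal) * ((k : EReal) * x) = x := by
  rw [← mul_assoc, ← EReal.coe_mul, inv_mul_cancel₀ hk.ne', EReal.coe_one, one_mul]

theorem ereal_cancel_inv (k : ℝ) (hk : 0 < k) (x : EReal) :
    (k : EReal) * (((k⁻¹ : ℝ) : EReal) * x) = x := by
  rw [← mul_assoc, ← EReal.coe_mul, mul_inv_cancel₀ hk.ne', EReal.coe_one, one_mul]

theorem ereal_mul_mono (k : ℝ) (hk : 0 < k) {x y : EReal} (h : x ≤ y) :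
    (k : EReal) * x ≤ (k : EReal) * y :=
  mul_le_mul_of_nonneg_left h (EReal.coe_nonneg.2 hk.le)

theorem ereal_inv_mul_le (k : ℝ) (hk : 0 < k) {x y : EReal} (h : x ≤ (k : EReal) * y) :
    ((k⁻¹ : ℝ) : EReal) * x ≤ y := by
  have := ereal_mul_mono k⁻¹ (inv_pos.2 hk) h
  rwa [ereal_inv_cancel k hk] at this

theorem ereal_le_mul (k : ℝ) (hk : 0 < k) {x y : EReal} (h : ((k⁻¹ : ℝ) : EReal) * x ≤ y) :
    x ≤ (k : EReal) * y := by
  have := ereal_mul_mono k hk h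
  rwa [ereal_cancel_inv k hk] at this

theorem concaveEnvelope_scale_le {X : Type*} [AddCommGroup X] [Module ℝ X]
    (g h : X → EReal) (c k : ℝ) (hc : 0 < c) (hk : 0 < k)
    (hgh : ∀ d, h (c • d) = (k : EReal) * g d) :
    concaveEnvelope h 0 ≤ (k : EReal) * concaveEnvelope g 0 := by
  apply ereal_le_mul k hk
  refine le_iInf ?_
  rintro ⟨ψ, hψ, hle⟩
  apply ereal_inv_mul_le k hk
  refine (iInf_le _ ⟨fun y => (k : EReal) * ψ (c⁻¹ • y), ?_, ?_⟩).trans ?_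
  rotate_left
  · intro x y a b ha hb hab
    have h1 := ereal_mul_mono k hk (hψ (c⁻¹ • x) (c⁻¹ • y) a b ha hb hab)
    rw [EReal.left_distrib_of_nonneg_of_ne_top (EReal.coe_nonneg.2 hk.le) (EReal.coe_ne_top k),
      mul_left_comm, mul_left_comm (k : EReal) (b : EReal)] at h1
    rw [smul_comm a c⁻¹ x, smul_comm b c⁻¹ y, ← smul_add] at h1
    exact h1
  · intro y
    have h1 := hgh (c⁻¹ • y)
    rw [smul_inv_smul₀ hc.ne'] at h1
    rw [h1]
    exact ereal_mul_mono k hk (hle _)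
  · simp

theorem Aop_hom_aux {X W : Type*} [AddCommGroup X] [Module ℝ X]
    [AddCommGroup W] [Module ℝ W]
    (Zset : Set W)
    (hZcone : ∀ (c : ℝ), 0 ≤ c → ∀ z ∈ Zset, c • z ∈ Zset)
    (φ : Zset → X → Zset)
    (hφhom : ∀ (c : ℝ) (hc : 0 ≤ c) (z : Zset) (d : X),
      (φ ⟨c • (z : W), hZcone c hc z z.2⟩ (c • d) : W) = c • (φ z d : W))
    (p : ℝ) (f : Zset → EReal)
    (hf : ∀ (c : ℝ) (hc : 0 < c) (z : Zset),
      f ⟨c • (z : W), hZcone c hc.le z z.2⟩ = ((c ^ p : ℝ) : EReal) * f z)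
    (c : ℝ) (hc : 0 < c) (z : Zset) :
    Aop φ f ⟨c • (z : W), hZcone c hc.le z z.2⟩ = ((c ^ p : ℝ) : EReal) * Aop φ f z := by
  have key : ∀ (c : ℝ) (hc : 0 < c) (z : Zset),
      Aop φ f ⟨c • (z : W), hZcone c hc.le z z.2⟩ ≤ ((c ^ p : ℝ) : EReal) * Aop φ f z := by
    intro c hc z
    refine concaveEnvelope_scale_le _ _ c (c ^ p) hc (Real.rpow_pos_of_pos hc p) ?_
    intro d
    rw [← hf c hc]
    congr 1
    exact Subtype.ext (hφhom c hc.le z d)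
  refine le_antisymm (key c hc z) ?_
  have h := key c⁻¹ (inv_pos.2 hc) ⟨c • (z : W), hZcone c hc.le z z.2⟩
  have e : (⟨c⁻¹ • ((⟨c • (z : W), hZcone c hc.le z z.2⟩ : Zset) : W),
      hZcone c⁻¹ (inv_pos.2 hc).le _ (hZcone c hc.le z z.2)⟩ : Zset) = z :=
    Subtype.ext (inv_smul_smul₀ hc.ne' _)
  rw [e, Real.inv_rpow hc.le] at h
  have h2 := ereal_mul_mono (c ^ p) (Real.rpow_pos_of_pos hc p) h
  rwa [ereal_cancel_inv _ (Real.rpow_pos_of_pos hc p)] at h2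

/-- On a cone `Z` (a subset of a real vector space closed under
multiplication by nonnegative scalars), if `φ` is positively homogeneous of degree one
(and `φ(z,0) = z`) and `f` is positively homogeneous of degree `p > 0`, then `Af` and
`A^∞f = lim_n Aⁿf` are positively homogeneous of degree `p` as well. -/
theorem Aop_homogeneous {X W : Type*} [AddCommGroup X] [Module ℝ X]
    [AddCommGroup W] [Module ℝ W]
    (Zset : Set W) (hZne : Zset.Nonempty)
    (hZcone : ∀ (c : ℝ), 0 ≤ c → ∀ z ∈ Zset, c • z ∈ Zset)
    (φ : Zset → X → Zset) (hφ0 : ∀ z, φ z 0 = z)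
    (hφhom : ∀ (c : ℝ) (hc : 0 ≤ c) (z : Zset) (d : X),
      (φ ⟨c • (z : W), hZcone c hc z z.2⟩ (c • d) : W) = c • (φ z d : W))
    (p : ℝ) (hp : 0 < p) (f : Zset → EReal)
    (hf : ∀ (c : ℝ) (hc : 0 < c) (z : Zset),
      f ⟨c • (z : W), hZcone c hc.le z z.2⟩ = ((c ^ p : ℝ) : EReal) * f z) :
    (∀ (c : ℝ) (hc : 0 < c) (z : Zset),
      Aop φ f ⟨c • (z : W), hZcone c hc.le z z.2⟩ = ((c ^ p : ℝ) : EReal) * Aop φ f z) ∧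
    (∀ (c : ℝ) (hc : 0 < c) (z : Zset),
      (⨆ n : ℕ, (Aop φ)^[n] f ⟨c • (z : W), hZcone c hc.le z z.2⟩) =
        ((c ^ p : ℝ) : EReal) * ⨆ n : ℕ, (Aop φ)^[n] f z) := by
  have hA := Aop_hom_aux Zset hZcone φ hφhom p
  have hn : ∀ (n : ℕ) (c : ℝ) (hc : 0 < c) (z : Zset),
      (Aop φ)^[n] f ⟨c • (z : W), hZcone c hc.le z z.2⟩ =
        ((c ^ p : ℝ) : EReal) * (Aop φ)^[n] f z := by
    intro n
    induction n with
    | zero => exact hf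
    | succ n ih =>
      rw [Function.iterate_succ_apply']
      exact hA _ ih
  refine ⟨hA f hf, ?_⟩
  intro c hc z
  have hk := Real.rpow_pos_of_pos hc p
  simp only [hn _ c hc z]
  apply le_antisymm
  · exact iSup_le fun n => ereal_mul_mono _ hk (le_iSup (fun n => (Aop φ)^[n] f z) n)
  · have h : (⨆ n : ℕ, (Aop φ)^[n] f z) ≤ (((c ^ p)⁻¹ : ℝ) : EReal) *
        ⨆ n : ℕ, ((c ^ p : ℝ) : EReal) * (Aop φ)^[n] f z := by
      refine iSup_le fun n => ?_
      rw [← ereal_inv_cancel _ hk ((Aop φ)^[n] f z)]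
      refine ereal_mul_mono _ (inv_pos.2 hk) ?_
      exact le_iSup (fun n => ((c ^ p : ℝ) : EReal) * (Aop φ)^[n] f z) n
    have h2 := ereal_mul_mono _ hk h
    rwa [ereal_cancel_inv _ hk] at h2
end

section
/- Let X be a real vector space, Z a nonempty set, φ : Z × X → Z with φ(z,0) = z for all z, and g : Z → EReal. Suppose that for every z ∈ Z there exists a linear functional ξ_z : X → ℝ such that g(φ(z,d)) ≤ g(z) + ξ_z(d) for all d ∈ X (addition in EReal). Then Ag = g. -/
/-- If for every `z` there is a linear functional `ξ_z : X → ℝ` with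
`g(φ(z,d)) ≤ g(z) + ξ_z(d)` for all `d`, then `Ag = g`. -/
theorem Aop_fixed_of_gradientIneq {X Z : Type*} [AddCommGroup X] [Module ℝ X] [Nonempty Z]
    (φ : Z → X → Z) (hφ : ∀ z, φ z 0 = z) (g : Z → EReal)
    (h : ∀ z : Z, ∃ ξ : X →ₗ[ℝ] ℝ, ∀ d : X, g (φ z d) ≤ g z + ((ξ d : ℝ) : EReal)) :
    Aop φ g = g := by
  funext z
  apply le_antisymm
  · obtain ⟨ξ, hξ⟩ := h z
    have hc : IsEConcave (fun d : X => g z + ((ξ d : ℝ) : EReal)) := by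
      intro x y a b ha hb hab
      induction hg : g z with
      | bot =>
        simp only [EReal.bot_add]
        rcases ha.lt_or_eq with ha | ha
        · rw [EReal.coe_mul_bot_of_pos ha, EReal.bot_add]
        · have hb1 : b = 1 := by linarith
          subst hb1
          simp
      | top => simp only [EReal.top_add_coe, le_top]
      | coe r =>
        simp only [map_add, map_smul, smul_eq_mul]
        norm_cast
        have : r = (a + b) * r := by rw [hab, one_mul]
        linarith
    refine (iInf_le _ ⟨fun d : X => g z + ((ξ d : ℝ) : EReal), hc, hξ⟩).trans ?_
    simp
  · refine le_iInf fun ψ => ?_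
    have := ψ.2.2 0
    simpa [hφ] using this
end

section
/- Let X be a real vector space, Z a nonempty set, φ : Z × X → Z with φ(z,0) = z for all z, and g : Z → EReal. Assume that for every z ∈ Z the concave function (g∘φ(z,·))^♯ is superdifferentiable at 0, i.e. ∂[(g∘φ(z,·))^♯](0) ≠ ∅. If Ag = g, then for every z ∈ Z there exists a linear functional ξ_z : X → ℝ such that g(φ(z,d)) ≤ g(z) + ξ_z(d) for all d ∈ X; consequently, under this superdifferentiability assumption, the fixed-point property Ag = g is equivalent to the existence of such functionals ξ_z for all z. -/
theorem le_concaveEnvelope_aux {X : Type*} [AddCommGroup X] [Module ℝ X]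
    (h : X → EReal) (x : X) : h x ≤ concaveEnvelope h x :=
  le_iInf fun ψ => ψ.2.2 x

theorem isEConcave_affine_aux {X : Type*} [AddCommGroup X] [Module ℝ X]
    (c : EReal) (ξ : X →ₗ[ℝ] ℝ) : IsEConcave (fun d => c + ((ξ d : ℝ) : EReal)) := by
  intro x y a b ha hb hab
  induction c with
  | bot =>
    simp only [EReal.bot_add]
    rcases ha.lt_or_eq with h | h
    · rw [EReal.coe_mul_bot_of_pos h, EReal.bot_add]
    · have : b = 1 := by linarith
      subst this
      simp
  | top => simp only [EReal.top_add_coe]; exact le_top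
  | coe r =>
    simp only [map_add, map_smul, smul_eq_mul]
    norm_cast
    have : b = 1 - a := by linarith
    subst this
    apply le_of_eq
    ring

/-- If for every `z` the concave envelope `(g∘φ(z,·))^♯` is
superdifferentiable at `0`, then `Ag = g` holds if and only if for every `z` there is a
linear functional `ξ_z : X → ℝ` with `g(φ(z,d)) ≤ g(z) + ξ_z(d)` for all `d`. -/
theorem Aop_fixed_iff_gradientIneq {X Z : Type*} [AddCommGroup X] [Module ℝ X] [Nonempty Z]
    (φ : Z → X → Z) (hφ : ∀ z, φ z 0 = z) (g : Z → EReal)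
    (hsup : ∀ z : Z, ∃ ξ : X →ₗ[ℝ] ℝ, ∀ d : X,
      concaveEnvelope (fun e => g (φ z e)) d ≤
        concaveEnvelope (fun e => g (φ z e)) 0 + ((ξ d : ℝ) : EReal)) :
    Aop φ g = g ↔
      ∀ z : Z, ∃ ξ : X →ₗ[ℝ] ℝ, ∀ d : X, g (φ z d) ≤ g z + ((ξ d : ℝ) : EReal) := by
  constructor
  · intro h z
    obtain ⟨ξ, hξ⟩ := hsup z
    refine ⟨ξ, fun d => ?_⟩
    have h0 : concaveEnvelope (fun e => g (φ z e)) 0 = g z := congrFun h z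
    rw [← h0]
    exact (le_concaveEnvelope_aux (fun e => g (φ z e)) d).trans (hξ d)
  · intro h
    funext z
    obtain ⟨ξ, hξ⟩ := h z
    apply le_antisymm
    · refine (iInf_le _ ⟨fun d => g z + ((ξ d : ℝ) : EReal),
        isEConcave_affine_aux (g z) ξ, hξ⟩).trans ?_
      simp
    · have := le_concaveEnvelope_aux (fun e => g (φ z e)) 0
      simp only [hφ] at this
      exact this
end

section
/- Let 1 < p < ∞ and let X be a nontrivial real normed vector space. Let Z = {(x,y) ∈ X × ℝ : |x| ≤ y}, φ((x,y), d) = (x + d, max(y, |x + d|)), and f(x,y) = y^p − (p/(p−1))^p |x|^p. Then the minimal fixed point of A dominating f is given explicitly by A^∞f(x,y) = y^p − (p/(p−1))^p |x|^p if |x| < (p−1)y/p, and A^∞f(x,y) = p y^p − (p²/(p−1)) |x| y^{p−1} if |x| ≥ (p−1)y/p. -/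
/-- The update map of Doob's inequality: `φ((x,y),d) = (x+d, max(y,|x+d|))` on the
state space `Z = {(x,y) : |x| ≤ y}`. -/
noncomputable def doobPhi (X : Type*) [NormedAddCommGroup X] [NormedSpace ℝ X] :
    {z : X × ℝ // ‖z.1‖ ≤ z.2} → X → {z : X × ℝ // ‖z.1‖ ≤ z.2} :=
  fun z d => ⟨(z.1.1 + d, max z.1.2 ‖z.1.1 + d‖), le_max_right _ _⟩

lemma doob_tangent {p : ℝ} (hp : 1 < p) {a b : ℝ} (ha : 0 ≤ a) (hb : 0 ≤ b) :
    a ^ p + p * a ^ (p - 1) * (b - a) ≤ b ^ p := by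
  rcases ha.eq_or_lt with rfl | ha
  · rw [Real.zero_rpow (by linarith), Real.zero_rpow (by linarith)]
    have := Real.rpow_nonneg hb p
    linarith
  · have h := one_add_mul_self_le_rpow_one_add (s := b / a - 1)
      (by have : 0 ≤ b / a := by positivity
          linarith) hp.le
    rw [show 1 + (b / a - 1) = b / a by ring, Real.div_rpow hb ha.le] at h
    have hap : 0 < a ^ p := Real.rpow_pos_of_pos ha p
    rw [le_div_iff₀ hap] at h
    rw [Real.rpow_sub_one ha.ne']
    calc _ = (1 + p * (b / a - 1)) * a ^ p := by field_simp
      _ ≤ _ := h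

/-- The tangent lines. -/
noncomputable def doobL (p m y r : ℝ) : ℝ :=
  y ^ p - (p / (p - 1)) ^ p * m ^ p - (p / (p - 1)) ^ p * (p * m ^ (p - 1)) * (r - m)

/-- The real-valued candidate. -/
noncomputable def doobU (p r y : ℝ) : ℝ :=
  if r < (p - 1) * y / p then y ^ p - (p / (p - 1)) ^ p * r ^ p
  else p * y ^ p - p ^ 2 / (p - 1) * r * y ^ (p - 1)

lemma doob_y_pow {p y : ℝ} (hp : 1 < p) (hy : 0 ≤ y) : y ^ p = y * y ^ (p - 1) := by
  have h := Real.rpow_add_of_nonneg hy (y := 1) (z := p - 1) zero_le_one (by linarith)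
  rw [Real.rpow_one] at h
  rw [← h]
  congr 1
  ring

lemma doobL_crit {p : ℝ} (hp : 1 < p) {y : ℝ} (hy : 0 ≤ y) (r : ℝ) :
    doobL p ((p - 1) * y / p) y r = p * y ^ p - p ^ 2 / (p - 1) * r * y ^ (p - 1) := by
  have hp0 : 0 < p := by linarith
  have hp1 : 0 < p - 1 := by linarith
  have hC : 0 < p / (p - 1) := by positivity
  have hM : (p - 1) * y / p = y / (p / (p - 1)) := by field_simp
  have h1 : (p / (p - 1)) ^ p * (y / (p / (p - 1))) ^ p = y ^ p := by
    rw [Real.div_rpow hy hC.le]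
    have := (Real.rpow_pos_of_pos hC p).ne'
    field_simp
  have h2 : (p / (p - 1)) ^ p * (y / (p / (p - 1))) ^ (p - 1) = p / (p - 1) * y ^ (p - 1) := by
    rw [Real.div_rpow hy hC.le, doob_y_pow hp hC.le]
    have := (Real.rpow_pos_of_pos hC (p - 1)).ne'
    rw [mul_assoc, mul_div_cancel₀ _ this]
  unfold doobL
  rw [hM, h1]
  have : (p / (p - 1)) ^ p * (p * (y / (p / (p - 1))) ^ (p - 1)) = p * (p / (p - 1) * y ^ (p - 1)) := by
    rw [← h2]; ring
  rw [this, doob_y_pow hp hy]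
  field_simp
  ring

lemma doobU_eq_L {p : ℝ} (hp : 1 < p) {y : ℝ} (hy : 0 ≤ y) (r : ℝ) :
    doobU p r y = doobL p (min r ((p - 1) * y / p)) y r := by
  unfold doobU
  split_ifs with h
  · rw [min_eq_left h.le]; simp [doobL]
  · rw [min_eq_right (not_lt.1 h), doobL_crit hp hy]

lemma doobL_anti {p : ℝ} (hp : 1 < p) {m M y r : ℝ} (hm : 0 ≤ m) (hmM : m ≤ M) (hMr : M ≤ r) :
    doobL p M y r ≤ doobL p m y r := by
  have hC : 0 ≤ (p / (p - 1)) ^ p :=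
    Real.rpow_nonneg (div_nonneg (by linarith) (by linarith)) _
  have h1 := doob_tangent hp hm (hm.trans hmM)
  have h2 : m ^ (p - 1) ≤ M ^ (p - 1) := Real.rpow_le_rpow hm hmM (by linarith)
  have h3 : m ^ p + p * m ^ (p - 1) * (r - m) ≤ M ^ p + p * M ^ (p - 1) * (r - M) := by
    have : p * m ^ (p - 1) * (r - M) ≤ p * M ^ (p - 1) * (r - M) := by
      gcongr
    linarith
  have := mul_le_mul_of_nonneg_left h3 hC
  unfold doobL
  linarith

lemma doobU_le_L {p : ℝ} (hp : 1 < p) {m y r : ℝ} (hy : 0 ≤ y) (hr : 0 ≤ r) (hm : 0 ≤ m)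
    (hmM : m ≤ (p - 1) * y / p) : doobU p r (max y r) ≤ doobL p m y r := by
  have hp0 : 0 < p := by linarith
  have hp1 : 0 < p - 1 := by linarith
  have hC : 0 ≤ (p / (p - 1)) ^ p := Real.rpow_nonneg (by positivity) _
  have hMy : (p - 1) * y / p ≤ y := by
    rw [div_le_iff₀ hp0]; nlinarith
  rcases le_total r y with hry | hry
  · rw [max_eq_left hry]
    rcases lt_or_ge r ((p - 1) * y / p) with h | h
    · rw [doobU, if_pos h]
      have := mul_le_mul_of_nonneg_left (doob_tangent hp hm hr) hC
      unfold doobL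
      linarith
    · rw [doobU, if_neg (not_lt.2 h), ← doobL_crit hp hy]
      exact doobL_anti hp hm hmM h
  · rw [max_eq_right hry]
    refine le_trans ?_ (doobL_anti hp hm hmM (hMy.trans hry))
    rw [doobL_crit hp hy]
    have hrr : (p - 1) * r / p ≤ r := by
      rw [div_le_iff₀ hp0]; nlinarith
    rw [doobU, if_neg (not_lt.2 hrr)]
    have h := doob_tangent hp hy hr
    have h' := mul_le_mul_of_nonneg_left h (show 0 ≤ p / (p - 1) by positivity)
    have e1 : p * r ^ p - p ^ 2 / (p - 1) * r * r ^ (p - 1) = - (p / (p - 1) * r ^ p) := by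
      rw [doob_y_pow hp hr]; field_simp; ring
    have e2 : p * y ^ p - p ^ 2 / (p - 1) * r * y ^ (p - 1)
        = - (p / (p - 1) * (y ^ p + p * y ^ (p - 1) * (r - y))) := by
      rw [doob_y_pow hp hy]; field_simp; ring
    rw [e1, e2]
    linarith

lemma doobL_concave {X : Type*} [NormedAddCommGroup X] [NormedSpace ℝ X] {p : ℝ} (hp : 1 < p)
    {m y : ℝ} (hm : 0 ≤ m) (x : X) :
    IsEConcave (fun d : X => ((doobL p m y ‖x + d‖ : ℝ) : EReal)) := by
  intro d e a b ha hb hab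
  have hC : 0 ≤ (p / (p - 1)) ^ p * (p * m ^ (p - 1)) :=
    mul_nonneg (Real.rpow_nonneg (div_nonneg (by linarith) (by linarith)) _)
      (mul_nonneg (by linarith) (Real.rpow_nonneg hm _))
  have hn : ‖x + (a • d + b • e)‖ ≤ a * ‖x + d‖ + b * ‖x + e‖ := by
    have : x + (a • d + b • e) = a • (x + d) + b • (x + e) := by
      have h1 : x = (a + b) • x := by rw [hab, one_smul]
      nth_rewrite 1 [h1]
      module
    rw [this]
    refine (norm_add_le _ _).trans ?_
    rw [norm_smul, norm_smul, Real.norm_of_nonneg ha, Real.norm_of_nonneg hb]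
  have key := mul_le_mul_of_nonneg_left hn hC
  have : a * doobL p m y ‖x + d‖ + b * doobL p m y ‖x + e‖
      ≤ doobL p m y ‖x + (a • d + b • e)‖ := by
    obtain rfl : b = 1 - a := by linarith
    unfold doobL
    linarith
  beta_reduce
  exact_mod_cast this

lemma Aop_mono {X Z : Type*} [AddCommGroup X] [Module ℝ X]
    (φ : Z → X → Z) {g h : Z → EReal} (H : ∀ z, g z ≤ h z) (z : Z) : Aop φ g z ≤ Aop φ h z := by
  refine le_iInf fun ψ => ?_
  exact iInf_le_of_le ⟨ψ.1, ψ.2.1, fun y => (H _).trans (ψ.2.2 y)⟩ le_rfl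

lemma Aop_convex {X Z : Type*} [AddCommGroup X] [Module ℝ X]
    (φ : Z → X → Z) (g : Z → EReal) (z : Z) (d e : X) (a b : ℝ) (ha : 0 ≤ a) (hb : 0 ≤ b)
    (hab : a + b = 1) (h0 : a • d + b • e = 0) :
    (a : EReal) * g (φ z d) + (b : EReal) * g (φ z e) ≤ Aop φ g z := by
  refine le_iInf fun ψ => ?_
  have h := ψ.2.1 d e a b ha hb hab
  rw [h0] at h
  refine le_trans ?_ h
  exact add_le_add (mul_le_mul_of_nonneg_left (ψ.2.2 d) (by exact_mod_cast ha))
    (mul_le_mul_of_nonneg_left (ψ.2.2 e) (by exact_mod_cast hb))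

lemma le_Aop_doob {X : Type*} [NormedAddCommGroup X] [NormedSpace ℝ X]
    (g : {z : X × ℝ // ‖z.1‖ ≤ z.2} → EReal) (z) : g z ≤ Aop (doobPhi X) g z := by
  refine le_iInf fun ψ => ?_
  have h := ψ.2.2 0
  have e : doobPhi X z 0 = z := by
    apply Subtype.ext
    simp [doobPhi, z.2]
  simpa only [e] using h

lemma Aop_doobU_le {X : Type*} [NormedAddCommGroup X] [NormedSpace ℝ X] {p : ℝ} (hp : 1 < p)
    (z : {z : X × ℝ // ‖z.1‖ ≤ z.2}) :
    Aop (doobPhi X) (fun z => ((doobU p ‖z.1.1‖ z.1.2 : ℝ) : EReal)) z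
      ≤ ((doobU p ‖z.1.1‖ z.1.2 : ℝ) : EReal) := by
  have hy : 0 ≤ z.1.2 := (norm_nonneg _).trans z.2
  have hM : 0 ≤ (p - 1) * z.1.2 / p :=
    div_nonneg (mul_nonneg (by linarith) hy) (by linarith)
  have hm : 0 ≤ min ‖z.1.1‖ ((p - 1) * z.1.2 / p) := le_min (norm_nonneg _) hM
  refine iInf_le_of_le ⟨_, doobL_concave hp (y := z.1.2) hm z.1.1, ?_⟩ ?_
  · intro d
    exact EReal.coe_le_coe_iff.2
      (doobU_le_L hp hy (norm_nonneg (z.1.1 + d)) hm (min_le_right _ _))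
  · rw [doobU_eq_L hp hy]
    simp

lemma deriv_nonneg_right {F : ℝ → ℝ} {a b F' : ℝ} (hab : a < b) (hF : HasDerivAt F F' a)
    (h0 : F a = 0) (h : ∀ x, a < x → x < b → 0 ≤ F x) : 0 ≤ F' := by
  have ht := (hasDerivAt_iff_tendsto_slope.1 hF).mono_left
    (nhdsWithin_mono a (fun x (hx : x ∈ Set.Ioi a) => (ne_of_gt hx : x ≠ a)))
  refine ge_of_tendsto ht ?_
  filter_upwards [Ioo_mem_nhdsGT hab] with x hx
  rw [slope_def_field, h0, sub_zero]
  exact div_nonneg (h x hx.1 hx.2) (by linarith [hx.1])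

/-- The main one-dimensional lower bound. -/
lemma doob_const {p : ℝ} (hp : 1 < p) (w : ℝ → ℝ) (c₀ : ℝ)
    (hlow : ∀ s, 0 < s → c₀ * s ^ p ≤ w s)
    (hw : ∀ s, 0 < s → ∀ θ δ : ℝ, 0 ≤ θ → θ < 1 → 0 < δ →
      (1 - θ) * w (s * (1 + δ)) + δ * (s ^ p * (1 - (p / (p - 1)) ^ p * θ ^ p))
        ≤ ((1 - θ) + δ) * w s) :
    ∀ s, 0 < s → - (p / (p - 1)) * s ^ p ≤ w s := by
  have hp0 : 0 < p := by linarith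
  have hp1 : 0 < p - 1 := by linarith
  set C := p / (p - 1) with hCdef
  have hC : 0 < C := by positivity
  let S : Set ℝ := (fun s => w s / s ^ p) '' Set.Ioi 0
  have hbdd : BddBelow S := by
    refine ⟨c₀, ?_⟩
    rintro _ ⟨s, hs, rfl⟩
    exact (le_div_iff₀ (Real.rpow_pos_of_pos hs p)).2 (hlow s hs)
  have hne : S.Nonempty := ⟨_, 1, by simp, rfl⟩
  set c := sInf S
  have hc : ∀ s, 0 < s → c * s ^ p ≤ w s := fun s hs =>
    (le_div_iff₀ (Real.rpow_pos_of_pos hs p)).1 (csInf_le hbdd ⟨s, hs, rfl⟩)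
  have h1 : ∀ θ δ : ℝ, 0 ≤ θ → θ < 1 → 0 < δ →
      0 ≤ ((1 - θ) + δ) * c - (1 - θ) * (c * (1 + δ) ^ p) - δ * (1 - C ^ p * θ ^ p) := by
    intro θ δ h0 h1 hd
    have hpos : 0 < (1 - θ) + δ := by linarith
    have : ((1 - θ) * (c * (1 + δ) ^ p) + δ * (1 - C ^ p * θ ^ p)) / ((1 - θ) + δ) ≤ c := by
      refine le_csInf hne ?_
      rintro _ ⟨s, hs, rfl⟩
      have hs : 0 < s := hs
      have hsp := Real.rpow_pos_of_pos hs p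
      change _ ≤ w s / s ^ p
      rw [div_le_div_iff₀ hpos hsp]
      have a1 := hw s hs θ δ h0 h1 hd
      have a2 := hc (s * (1 + δ)) (by positivity)
      rw [Real.mul_rpow hs.le (by linarith)] at a2
      have a3 := mul_le_mul_of_nonneg_left a2 (show 0 ≤ 1 - θ by linarith)
      linarith
    rw [div_le_iff₀ hpos] at this
    linarith
  have h2 : ∀ θ : ℝ, 0 ≤ θ → θ < 1 → 0 ≤ c - (1 - θ) * (c * p) - (1 - C ^ p * θ ^ p) := by
    intro θ h0 h1'
    refine deriv_nonneg_right (a := 0) (b := 1) one_pos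
      (F := fun δ => ((1 - θ) + δ) * c - (1 - θ) * (c * (1 + δ) ^ p) - δ * (1 - C ^ p * θ ^ p))
      ?_ ?_ (fun δ hd _ => h1 θ δ h0 h1' hd)
    · have e1 : HasDerivAt (fun δ : ℝ => (1 + δ) ^ p) p 0 := by
        have := ((hasDerivAt_id (0:ℝ)).const_add 1).rpow_const (p := p) (Or.inr hp.le)
        simpa using this
      have e2 := ((((hasDerivAt_id (0:ℝ)).const_add (1 - θ)).mul_const c).sub
        ((e1.const_mul c).const_mul (1 - θ))).sub
          ((hasDerivAt_id (0:ℝ)).mul_const (1 - C ^ p * θ ^ p))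
      refine e2.congr_deriv ?_
      ring
    · simp
  have hθ : (p - 1) / p < 1 := by rw [div_lt_one hp0]; linarith
  have hθ0 : 0 < (p - 1) / p := by positivity
  have hθC : (p - 1) / p = C⁻¹ := by rw [hCdef, inv_div]
  have h3 : 0 ≤ c * p + C ^ p * (p * ((p - 1) / p) ^ (p - 1)) := by
    refine deriv_nonneg_right (a := (p - 1) / p) (b := 1) hθ
      (F := fun θ => c - (1 - θ) * (c * p) - (1 - C ^ p * θ ^ p))
      ?_ ?_ (fun θ ht ht1 => h2 θ (by linarith) ht1)
    · have e1 := Real.hasDerivAt_rpow_const (x := (p - 1) / p) (p := p) (Or.inr hp.le)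
      have e2 := ((((hasDerivAt_id ((p - 1) / p)).const_sub 1).mul_const (c * p)).const_sub c).sub
        ((e1.const_mul (C ^ p)).const_sub 1)
      refine e2.congr_deriv ?_
      ring
    · have : C ^ p * ((p - 1) / p) ^ p = 1 := by
        rw [hθC, ← Real.mul_rpow hC.le (by positivity), mul_inv_cancel₀ hC.ne', Real.one_rpow]
      simp only [this]
      field_simp
      ring
  have h4 : C ^ p * ((p - 1) / p) ^ (p - 1) = C := by
    rw [doob_y_pow hp hC.le, hθC, mul_assoc, ← Real.mul_rpow hC.le (by positivity),
      mul_inv_cancel₀ hC.ne', Real.one_rpow, mul_one]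
  have h5 : -C ≤ c := by
    have : 0 ≤ (c + C) * p := by
      have : C ^ p * (p * ((p - 1) / p) ^ (p - 1)) = C * p := by
        calc _ = (C ^ p * ((p - 1) / p) ^ (p - 1)) * p := by ring
          _ = _ := by rw [h4]
      linarith
    have := nonneg_of_mul_nonneg_left this hp0
    linarith
  intro s hs
  exact (mul_le_mul_of_nonneg_right h5 (Real.rpow_nonneg hs.le p)).trans (hc s hs)

/-- For `1 < p < ∞` and `f(x,y) = y^p - (p/(p-1))^p |x|^p` on
`Z = {|x| ≤ y}`, the minimal fixed point of `A` dominating `f` (i.e. `A^∞f = lim_n Aⁿf`)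
is `f(x,y)` for `|x| < (p-1)y/p` and `p y^p - p²/(p-1) |x| y^{p-1}` for `|x| ≥ (p-1)y/p`. -/
theorem doob_minimal_fixed_point {X : Type*} [NormedAddCommGroup X] [NormedSpace ℝ X]
    [Nontrivial X] (p : ℝ) (hp : 1 < p)
    (f : {z : X × ℝ // ‖z.1‖ ≤ z.2} → EReal)
    (hf : ∀ z, f z = ((z.1.2 ^ p - (p / (p - 1)) ^ p * ‖z.1.1‖ ^ p : ℝ) : EReal)) :
    ∀ z : {z : X × ℝ // ‖z.1‖ ≤ z.2},
      (⨆ n : ℕ, (Aop (doobPhi X))^[n] f z) =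
        if ‖z.1.1‖ < (p - 1) * z.1.2 / p
        then ((z.1.2 ^ p - (p / (p - 1)) ^ p * ‖z.1.1‖ ^ p : ℝ) : EReal)
        else ((p * z.1.2 ^ p - p ^ 2 / (p - 1) * ‖z.1.1‖ * z.1.2 ^ (p - 1) : ℝ) : EReal) := by
  
  have hp0 : 0 < p := by linarith
  have hp1 : 0 < p - 1 := by linarith
  have hup : ∀ n z, (Aop (doobPhi X))^[n] f z ≤ ((doobU p ‖z.1.1‖ z.1.2 : ℝ) : EReal) := by
    intro n
    induction n with
    | zero =>
      intro z
      have hy : 0 ≤ z.1.2 := (norm_nonneg _).trans z.2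
      rw [Function.iterate_zero, id, hf]
      norm_cast
      unfold doobU
      split_ifs with h
      · exact le_rfl
      · rw [← doobL_crit hp hy]
        have := mul_le_mul_of_nonneg_left
          (doob_tangent hp (a := (p - 1) * z.1.2 / p) (b := ‖z.1.1‖) (by positivity)
            (norm_nonneg _)) (show 0 ≤ (p / (p - 1)) ^ p by positivity)
        unfold doobL
        linarith
    | succ n ih =>
      intro z
      rw [Function.iterate_succ_apply']
      exact (Aop_mono _ ih z).trans (Aop_doobU_le hp z)
  have hstep : ∀ n z, (Aop (doobPhi X))^[n] f z ≤ (Aop (doobPhi X))^[n + 1] f z := by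
    intro n z
    rw [Function.iterate_succ_apply']
    exact le_Aop_doob _ z
  have hlowf : ∀ n z, f z ≤ (Aop (doobPhi X))^[n] f z := by
    intro n z
    exact monotone_nat_of_le_succ (f := fun n => (Aop (doobPhi X))^[n] f z)
      (fun n => hstep n z) (Nat.zero_le n)
  have hreal : ∀ n z, ∃ v : ℝ, (Aop (doobPhi X))^[n] f z = (v : EReal) := by
    intro n z
    refine ⟨((Aop (doobPhi X))^[n] f z).toReal, (EReal.coe_toReal ?_ ?_).symm⟩
    · exact ne_top_of_le_ne_top (EReal.coe_ne_top _) (hup n z)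
    · refine ne_bot_of_le_ne_bot ?_ (hlowf n z)
      rw [hf]
      exact EReal.coe_ne_bot _
  choose vn hvn using hreal
  have hvmono : ∀ z, Monotone (fun n => vn n z) := by
    intro z
    refine monotone_nat_of_le_succ fun n => ?_
    have := hstep n z
    rw [hvn, hvn] at this
    exact_mod_cast this
  have hvup : ∀ n z, vn n z ≤ doobU p ‖z.1.1‖ z.1.2 := by
    intro n z
    have := hup n z
    rw [hvn] at this
    exact_mod_cast this
  have hlim : ∀ z, ∃ v : ℝ, Filter.Tendsto (fun n => vn n z) Filter.atTop (nhds v) := fun z =>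
    ⟨_, tendsto_atTop_ciSup (hvmono z) ⟨_, by rintro _ ⟨n, rfl⟩; exact hvup n z⟩⟩
  choose v hv using hlim
  have hvf : ∀ z, z.1.2 ^ p - (p / (p - 1)) ^ p * ‖z.1.1‖ ^ p ≤ v z := by
    intro z
    refine ge_of_tendsto' (hv z) fun n => ?_
    have := hlowf n z
    rw [hvn, hf] at this
    exact_mod_cast this
  have hvc : ∀ z (d e : X) (a b : ℝ), 0 ≤ a → 0 ≤ b → a + b = 1 → a • d + b • e = 0 →
      a * v (doobPhi X z d) + b * v (doobPhi X z e) ≤ v z := by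
    intro z d e a b ha hb hab h0
    refine le_of_tendsto_of_tendsto' (((hv _).const_mul a).add ((hv _).const_mul b))
      ((hv z).comp (Filter.tendsto_add_atTop_nat 1)) fun n => ?_
    have := Aop_convex (doobPhi X) ((Aop (doobPhi X))^[n] f) z d e a b ha hb hab h0
    rw [← Function.iterate_succ_apply' (Aop (doobPhi X)), hvn, hvn, hvn] at this
    exact_mod_cast this
  have main : ∀ z : {z : X × ℝ // ‖z.1‖ ≤ z.2}, doobU p ‖z.1.1‖ z.1.2 ≤ v z := by
    rintro ⟨⟨x, y⟩, hz⟩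
    have hxy : ‖x‖ ≤ y := hz
    have hy : 0 ≤ y := (norm_nonneg _).trans hxy
    change doobU p ‖x‖ y ≤ _
    rcases lt_or_ge ‖x‖ ((p - 1) * y / p) with h | h
    · rw [doobU, if_pos h]
      exact hvf ⟨(x, y), hz⟩
    rcases hy.eq_or_lt with rfl | hy'
    · have hx : x = 0 := norm_le_zero_iff.1 hxy
      subst hx
      refine le_trans ?_ (hvf ⟨(0, 0), hz⟩)
      simp [doobU, Real.zero_rpow hp0.ne']
    have hx0 : 0 < ‖x‖ := lt_of_lt_of_le (by positivity) h
    obtain ⟨u, hu, hxu⟩ : ∃ u : X, ‖u‖ = 1 ∧ x = ‖x‖ • u := by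
      refine ⟨‖x‖⁻¹ • x, ?_, ?_⟩
      · rw [norm_smul, norm_inv, norm_norm, inv_mul_cancel₀ hx0.ne']
      · rw [smul_smul, mul_inv_cancel₀ hx0.ne', one_smul]
    have hnu : ∀ t : ℝ, 0 ≤ t → ‖t • u‖ = t := fun t ht => by
      rw [norm_smul, hu, mul_one, Real.norm_of_nonneg ht]
    -- the diagonal function
    have hdiag : ∀ s : ℝ, ‖(|s| • u : X)‖ ≤ |s| := fun s => (hnu _ (abs_nonneg s)).le
    let D : ℝ → {z : X × ℝ // ‖z.1‖ ≤ z.2} := fun s => ⟨(|s| • u, |s|), hdiag s⟩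
    have hD : ∀ s, 0 < s → - (p / (p - 1)) * s ^ p ≤ v (D s) := by
      refine doob_const hp (fun s => v (D s)) (1 - (p / (p - 1)) ^ p) ?_ ?_
      · intro s hs
        have : |s| ^ p - (p / (p - 1)) ^ p * ‖(|s| • u : X)‖ ^ p ≤ v (D s) := hvf (D s)
        rw [hnu _ (abs_nonneg s), abs_of_pos hs] at this
        refine le_trans (le_of_eq ?_) this
        ring
      · intro s hs θ δ h0 h1 hd
        have hden : 0 < (1 - θ) + δ := by linarith
        have key := hvc (D s) ((s * δ) • u) ((-(s * (1 - θ))) • u)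
          ((1 - θ) / ((1 - θ) + δ)) (δ / ((1 - θ) + δ))
          (div_nonneg (by linarith) hden.le) (by positivity)
          (by field_simp)
          (by rw [smul_smul, smul_smul, ← add_smul]
              convert zero_smul ℝ u using 2
              field_simp
              ring)
        have e1 : doobPhi X (D s) ((s * δ) • u) = D (s * (1 + δ)) := by
          have hpos : 0 < s * (1 + δ) := by positivity
          have : s • u + (s * δ) • u = (s * (1 + δ)) • u := by
            rw [← add_smul]; congr 1; ring
          apply Subtype.ext
          simp only [doobPhi, D, this, hnu _ hpos.le, abs_of_pos hpos, abs_of_pos hs]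
          rw [max_eq_right]
          nlinarith
        have e2 : s ^ p * (1 - (p / (p - 1)) ^ p * θ ^ p)
            ≤ v (doobPhi X (D s) ((-(s * (1 - θ))) • u)) := by
          have hpos : 0 ≤ s * θ := by positivity
          have : s • u + (-(s * (1 - θ))) • u = (s * θ) • u := by
            rw [← add_smul]; congr 1; ring
          refine le_trans (le_of_eq ?_) (hvf _)
          simp only [doobPhi, D, this, hnu _ hpos, abs_of_pos hs]
          rw [max_eq_left (by nlinarith), Real.mul_rpow hs.le h0]
          ring
        rw [e1, div_mul_eq_mul_div, div_mul_eq_mul_div, ← add_div, div_le_iff₀ hden] at key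
        have := mul_le_mul_of_nonneg_left e2 hd.le
        linarith
    have hDy := hD y hy'
    set M := (p - 1) * y / p with hM
    have hMy : M < y := by
      rw [hM, div_lt_iff₀ hp0]; nlinarith
    have hM0 : 0 < M := by positivity
    -- weights
    have key := hvc ⟨(x, y), hz⟩ ((y - ‖x‖) • u) ((M - ‖x‖) • u)
      ((‖x‖ - M) / (y - M)) ((y - ‖x‖) / (y - M))
      (div_nonneg (by linarith) (by linarith)) (div_nonneg (by linarith) (by linarith))
      (by rw [← add_div, div_eq_one_iff_eq (by linarith)]; ring)
      (by rw [smul_smul, smul_smul, ← add_smul]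
          convert zero_smul ℝ u using 2
          ring)
    have e1 : doobPhi X ⟨(x, y), hz⟩ ((y - ‖x‖) • u) = D y := by
      have : x + (y - ‖x‖) • u = y • u := by
        nth_rewrite 1 [hxu]
        rw [← add_smul]; congr 1; ring
      apply Subtype.ext
      simp only [doobPhi, D, this, hnu _ hy, abs_of_pos hy', max_self]
    have e2 : 0 ≤ v (doobPhi X ⟨(x, y), hz⟩ ((M - ‖x‖) • u)) := by
      have : x + (M - ‖x‖) • u = M • u := by
        nth_rewrite 1 [hxu]
        rw [← add_smul]; congr 1; ring
      refine le_trans (le_of_eq ?_) (hvf _)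
      simp only [doobPhi, this, hnu _ hM0.le]
      rw [max_eq_left hMy.le, ← Real.mul_rpow (by positivity) hM0.le,
        show p / (p - 1) * M = y by rw [hM]; field_simp, sub_self]
    rw [e1] at key
    refine le_trans ?_ key
    have a1 := mul_le_mul_of_nonneg_left hDy
      (show 0 ≤ (‖x‖ - M) / (y - M) from div_nonneg (by linarith) (by linarith))
    have a2 := mul_nonneg
      (show 0 ≤ (y - ‖x‖) / (y - M) from div_nonneg (by linarith) (by linarith)) e2
    have a3 : doobU p ‖x‖ y = (‖x‖ - M) / (y - M) * (-(p / (p - 1)) * y ^ p) := by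
      rw [doobU, if_neg (not_lt.2 h)]
      have : y - M = y / p := by rw [hM]; field_simp; ring
      rw [this, hM, doob_y_pow hp hy]
      field_simp
      ring
    linarith
  intro z
  have hfin : (⨆ n : ℕ, (Aop (doobPhi X))^[n] f z) = ((doobU p ‖z.1.1‖ z.1.2 : ℝ) : EReal) := by
    refine le_antisymm (iSup_le fun n => hup n z) ?_
    refine le_trans (EReal.coe_le_coe_iff.2 (main z)) ?_
    refine le_of_tendsto' ((continuous_coe_real_ereal.tendsto _).comp (hv z)) fun n => ?_
    have := le_iSup (fun n : ℕ => (Aop (doobPhi X))^[n] f z) n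
    refine le_trans (le_of_eq ?_) this
    exact (hvn n z).symm
  rw [hfin, doobU]
  split_ifs <;> rfl
end
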